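/- arXiv:2205.06685 — 2 statements merged into one kernel-verified Lean document; each statement's English description precedes it below -/
import Mathlib

section
/- Let (P_n) be the Perrin sequence defined by P_0 = 3, P_1 = 0, P_2 = 2, and P_{n+3} = P_{n+1} + P_n for n ≥ 0. Then for any prime p not dividing 2·3·23, the following are equivalent: (1) P_{p+1} ≡ 2 (mod p); (2) there exist integers X, Y with p = X^2 + 23Y^2; (3) -23 is a quadratic residue modulo p and x^3 - x - 1 ≡ 0 (mod p) has a solution in Z/pZ. -/
abbrev EZ := QuadraticAlgebra ℤ (-1) (-1)

namespace Perrin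

lemma EZ_norm (z : EZ) : z.norm = z.re ^ 2 - z.re * z.im + z.im ^ 2 := by
  rw [QuadraticAlgebra.norm_def]; ring

lemma quad_zero {a b : ℤ} (h : a ^ 2 - a * b + b ^ 2 = 0) : a = 0 ∧ b = 0 := by
  have h1 : b = 0 := by
    have : b ^ 2 = 0 := by nlinarith [sq_nonneg (2 * a - b), sq_nonneg b]
    exact pow_eq_zero_iff (two_ne_zero) |>.1 this
  subst h1
  refine ⟨?_, rfl⟩
  have : a ^ 2 = 0 := by linarith
  exact pow_eq_zero_iff (two_ne_zero) |>.1 this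

lemma EZ_norm_eq_zero {z : EZ} (h : z.norm = 0) : z = 0 := by
  rw [EZ_norm] at h
  obtain ⟨h1, h2⟩ := quad_zero h
  ext <;> simp [h1, h2]

instance : NoZeroDivisors EZ where
  eq_zero_or_eq_zero_of_mul_eq_zero := by
    intro a b h
    have := congrArg QuadraticAlgebra.norm h
    rw [map_mul, QuadraticAlgebra.norm_zero] at this
    rcases mul_eq_zero.1 this with h | h
    · exact Or.inl (EZ_norm_eq_zero h)
    · exact Or.inr (EZ_norm_eq_zero h)

instance : IsDomain EZ := NoZeroDivisors.to_isDomain _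

def om : EZ := ⟨0, 1⟩

lemma om_sq : om ^ 2 + om + 1 = 0 := by
  rw [sq]; ext <;> simp [om, QuadraticAlgebra.re_one, QuadraticAlgebra.im_one]

lemma om_prim : IsPrimitiveRoot om 3 := by
  refine IsPrimitiveRoot.of_map_of_injective (f := RingHom.id EZ) ?_ Function.injective_id
  have h3 : om ^ 3 = 1 := by linear_combination (om - 1) * om_sq
  have := orderOf_eq_prime h3 (by
    intro h; have := congrArg QuadraticAlgebra.im h; simp [om, QuadraticAlgebra.im_one] at this)
  simpa [this] using IsPrimitiveRoot.orderOf om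

/-- conj as ring hom -/
abbrev cj : EZ →+* EZ := starRingEnd EZ

lemma star_cube {z : EZ} (h : z ^ 3 = 1) : star z = z ^ 2 := by
  have h1 : z.norm ^ 3 = 1 := by rw [← map_pow, h, map_one]
  have h2 : z.norm = 1 := by
    have : 0 ≤ z.norm := by rw [EZ_norm]; nlinarith [sq_nonneg (2 * z.re - z.im), sq_nonneg z.im]
    exact (pow_eq_one_iff_of_nonneg this (by norm_num)).1 h1
  have h3 := QuadraticAlgebra.algebraMap_norm_eq_mul_star z
  rw [h2, map_one] at h3
  calc star z = z ^ 3 * star z := by rw [h, one_mul]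
    _ = z ^ 2 * (z * star z) := by ring
    _ = z ^ 2 := by rw [← h3, mul_one]

/-- cubic relation at a prime q -/
def Rel (th : EZ) (c : EZ) (q : ℕ) [Fact q.Prime] : Prop :=
  ∀ f : EZ →+* AlgebraicClosure (ZMod q),
    (q % 3 = 1 → f th ^ ((q - 1) / 3) = f c * f (star th) ^ ((q - 1) / 3)) ∧
    (q % 3 = 2 → f c * f th ^ ((q + 1) / 3) = f (star th) ^ ((q + 1) / 3))

def Good (th : EZ) : Prop :=
  ∃ χ : ℤ →* EZ, (∀ m n : ℤ, th.norm ∣ m - n → χ m = χ n) ∧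
    (∀ n : ℤ, IsCoprime n th.norm → χ n ^ 3 = 1) ∧
    ∀ (q : ℕ) [Fact q.Prime], q ≠ 3 → IsCoprime (q : ℤ) th.norm → Rel th (χ q) q

lemma Good.mul {a b : EZ} (ha : Good a) (hb : Good b) : Good (a * b) := by
  obtain ⟨χ, h1, h2, h3⟩ := ha
  obtain ⟨φ, k1, k2, k3⟩ := hb
  refine ⟨χ * φ, ?_, ?_, ?_⟩
  · intro m n h
    rw [map_mul] at h
    simp only [MonoidHom.mul_apply]
    rw [h1 m n ((dvd_mul_right _ _).trans h), k1 m n ((dvd_mul_left _ _).trans h)]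
  · intro n h
    rw [map_mul] at h
    simp only [MonoidHom.mul_apply]
    rw [mul_pow, h2 n h.of_mul_right_left, k2 n h.of_mul_right_right, mul_one]
  · intro q _ hq h f
    rw [map_mul] at h
    have A := h3 q hq h.of_mul_right_left f
    have B := k3 q hq h.of_mul_right_right f
    simp only [MonoidHom.mul_apply, map_mul, star_mul, mul_pow]
    refine ⟨fun h => ?_, fun h => ?_⟩
    · rw [A.1 h, B.1 h]; ring
    · rw [← A.2 h, ← B.2 h]; ring

lemma Good.of_int (n : ℤ) : Good (n : EZ) := by
  refine ⟨1, fun _ _ _ => rfl, fun _ _ => one_pow _, ?_⟩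
  intro q _ hq h f
  simp

lemma Good.star {a : EZ} (ha : Good a) : Good (star a) := by
  obtain ⟨χ, h1, h2, h3⟩ := ha
  refine ⟨(cj : EZ →* EZ).comp χ, ?_, ?_, ?_⟩
  · intro m n h
    rw [QuadraticAlgebra.norm_star] at h
    simp [h1 m n h]
  · intro n h
    rw [QuadraticAlgebra.norm_star] at h
    change cj (χ n) ^ 3 = 1
    rw [← map_pow, h2 n h, map_one]
  · intro q _ hq h f
    rw [QuadraticAlgebra.norm_star] at h
    have := h3 q hq h (f.comp cj)
    simp only [RingHom.comp_apply, starRingEnd_apply] at this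
    rw [star_star]
    rw [star_star] at this
    exact this

lemma frob_core {l q : ℕ} [Fact l.Prime] [Fact q.Prime] {F : Type*} [Field F] [CharP F q]
    (hlq : q ≠ l) {χ : MulChar (ZMod l) F} (ψ : AddChar (ZMod l) F) :
    χ q ^ q * gaussSum χ ψ ^ q = gaussSum (χ ^ q) ψ := by
  have hu : IsUnit (q : ZMod l) := by
    rw [ZMod.isUnit_iff_coprime]
    exact (Nat.coprime_primes Fact.out Fact.out).2 hlq
  rw [gaussSum_frob (p := q), AddChar.pow_mulShift, ← gaussSum_mulShift (χ ^ q) ψ hu.unit, hu.unit_spec,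
    MulChar.pow_apply' _ (Nat.Prime.ne_zero Fact.out)]

lemma pow_one_mod {M : Type*} [Monoid M] {x : M} (h : x ^ 3 = 1) {q : ℕ} (hq : q % 3 = 1) :
    x ^ q = x := by
  obtain ⟨m, rfl⟩ : ∃ m, q = 3 * m + 1 := ⟨q / 3, by omega⟩
  rw [pow_succ, pow_mul, h, one_pow, one_mul]

lemma core_good {l : ℕ} [Fact l.Prime] {χ : MulChar (ZMod l) EZ} (hχ : orderOf χ = 3) (q : ℕ) [Fact q.Prime]
   (hq : q ≠ 3) (hlq : q ≠ l) : Rel (jacobiSum χ χ) (χ q) q := by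
  intro f
  set F := AlgebraicClosure (ZMod q)
  have hl0 : (l : F) ≠ 0 := by
    intro h
    rw [CharP.cast_eq_zero_iff F q] at h
    exact hlq ((Nat.prime_dvd_prime_iff_eq Fact.out Fact.out).1 h)
  have : NeZero (l : F) := ⟨hl0⟩
  obtain ⟨ζ, hζ⟩ := HasEnoughRootsOfUnity.exists_primitiveRoot F l
  set ψ := AddChar.zmodChar l ((IsPrimitiveRoot.iff_def ζ l).mp hζ).left with hψd
  have hψ : ψ.IsPrimitive := AddChar.zmodChar_primitive_of_primitive_root l hζ
  set φ : MulChar (ZMod l) F := χ.ringHomComp f with hφ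
  have hχ3 : χ ^ 3 = 1 := by rw [← hχ, pow_orderOf_eq_one]
  have hφ3 : φ ^ 3 = 1 := by rw [hφ, MulChar.ringHomComp_pow, hχ3]; simp
  -- f injective on cube roots
  have hf : f om ≠ 1 := by
    intro h
    have := congrArg f om_sq
    simp only [map_add, map_pow, h, map_one, map_zero] at this
    have h3 : ((3:ℕ) : F) = 0 := by push_cast; linear_combination this
    rw [CharP.cast_eq_zero_iff F q] at h3
    exact hq ((Nat.prime_dvd_prime_iff_eq Fact.out Nat.prime_three).1 h3)
  have hφ1 : φ ≠ 1 := by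
    intro h
    have hχ1 : χ ≠ 1 := by intro h; rw [h, orderOf_one] at hχ; omega
    apply hχ1
    refine MulChar.ext fun x => ?_
    have h3 : (χ x) ^ 3 = 1 := by
      rw [← MulChar.pow_apply_coe, hχ3, MulChar.one_apply_coe]
    obtain ⟨i, hi, hi2⟩ := om_prim.eq_pow_of_pow_eq_one h3
    have h4 : f (χ x) = 1 := by
      have := congrFun (congrArg DFunLike.coe h) (x : ZMod l)
      simpa [hφ] using this
    rw [← hi2, map_pow] at h4
    rw [MulChar.one_apply_coe, ← hi2]
    interval_cases i
    · simp
    · simp at h4; exact absurd h4 hf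
    · exfalso; apply hf
      have h5 : f om ^ 3 = 1 := by rw [← map_pow, om_prim.pow_eq_one, map_one]
      calc f om = f om * f om ^ 2 := by rw [h4, mul_one]
        _ = f om ^ 3 := by ring
        _ = 1 := h5
  have hinv : φ ^ 2 = φ⁻¹ := by
    rw [eq_inv_iff_mul_eq_one, ← pow_succ, hφ3]
  have hm1 : φ (-1) = 1 := by
    have h1 : φ (-1) ^ 3 = 1 := by
      rw [← MulChar.pow_apply' _ (by norm_num), hφ3]
      exact MulChar.one_apply (isUnit_one.neg)
    have h2 : φ (-1) ^ 3 = φ (-1) := by rw [← map_pow]; norm_num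
    rw [← h2, h1]
  set g1 := gaussSum φ ψ
  set g2 := gaussSum φ⁻¹ ψ
  have hg : g1 * g2 = l := by
    have h1 := gaussSum_mul_gaussSum_eq_card hφ1 hψ
    have h2 := mul_gaussSum_inv_eq_gaussSum φ⁻¹ ψ
    have h3 : φ⁻¹ (-1) = 1 := by rw [← hinv, MulChar.pow_apply' _ (by norm_num), hm1, one_pow]
    rw [h3, one_mul] at h2
    rw [h2, ZMod.card] at h1
    exact h1
  have hg1 : g1 ≠ 0 := by rintro h; rw [h, zero_mul] at hg; exact hl0 hg.symm
  have hg2 : g2 ≠ 0 := by rintro h; rw [h, mul_zero] at hg; exact hl0 hg.symm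
  have hJ1 : g1 ^ 3 = l * f (jacobiSum χ χ) := by
    have := jacobiSum_mul_nontrivial (χ := φ) (φ := φ) (by rw [← sq, hinv]; simpa using hφ1) ψ
    rw [← sq, hinv, jacobiSum_ringHomComp] at this
    rw [← hg]; linear_combination (-g1) * this
  have hstar : φ⁻¹ = χ.ringHomComp (f.comp cj) := by
    rw [← hinv]
    ext x
    have h3 : (χ x) ^ 3 = 1 := by
      rw [← MulChar.pow_apply_coe, hχ3, MulChar.one_apply_coe]
    have h4 : cj (χ x) = χ x ^ 2 := star_cube h3
    simp [hφ, MulChar.pow_apply_coe, h4]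
  have hJ2 : g2 ^ 3 = l * f (star (jacobiSum χ χ)) := by
    have := jacobiSum_mul_nontrivial (χ := φ⁻¹) (φ := φ⁻¹) (by
      rw [← sq, inv_pow, hinv]; simpa using hφ1) ψ
    rw [← sq, inv_pow, hinv, inv_inv] at this
    have e : jacobiSum φ⁻¹ φ⁻¹ = f (star (jacobiSum χ χ)) := by
      rw [hstar, jacobiSum_ringHomComp]; rfl
    rw [e] at this
    rw [← hg]; linear_combination (-g2) * this
  have hF1 := frob_core hlq (χ := φ) ψ
  have hF2 := frob_core hlq (χ := φ⁻¹) ψ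
  have hu : IsUnit (q : ZMod l) := by
    rw [ZMod.isUnit_iff_coprime]
    exact (Nat.coprime_primes Fact.out Fact.out).2 hlq
  set c : F := f (χ q) with hc
  have hcφ : φ q = c := rfl
  have hc3 : c ^ 3 = 1 := by
    rw [← hcφ, ← MulChar.pow_apply' _ (by norm_num), hφ3]
    exact MulChar.one_apply hu
  have hc2 : φ⁻¹ q = c ^ 2 := by rw [← hinv, MulChar.pow_apply' _ (by norm_num), hcφ]
  rw [hcφ] at hF1
  rw [hc2] at hF2
  have hc0 : c ≠ 0 := by rintro h; simp [h] at hc3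
  refine ⟨fun hq1 => ?_, fun hq2 => ?_⟩
  · obtain ⟨m, hm⟩ : ∃ m, q = 3 * m + 1 := ⟨q / 3, by omega⟩
    have e : (q - 1) / 3 = m := by omega
    rw [e]
    have p1 : φ ^ q = φ := pow_one_mod hφ3 hq1
    have p2 : φ⁻¹ ^ q = φ⁻¹ := by rw [inv_pow, p1]
    have cq : c ^ q = c := pow_one_mod hc3 hq1
    rw [p1, cq] at hF1
    rw [p2, ← pow_mul, mul_comm 2 q, pow_mul, cq] at hF2
    have a1 : c * (l * f (jacobiSum χ χ)) ^ m = 1 := by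
      rw [← hJ1, ← pow_mul]
      apply mul_right_cancel₀ hg1
      rw [mul_assoc, ← pow_succ, ← hm, one_mul]; exact hF1
    have a2 : c ^ 2 * (l * f (star (jacobiSum χ χ))) ^ m = 1 := by
      rw [← hJ2, ← pow_mul]
      apply mul_right_cancel₀ hg2
      rw [mul_assoc, ← pow_succ, ← hm, one_mul]; exact hF2
    apply mul_left_cancel₀ (pow_ne_zero m hl0)
    apply mul_left_cancel₀ hc0
    rw [mul_pow] at a1 a2
    linear_combination a1 - a2
  · obtain ⟨m, hm⟩ : ∃ m, q + 1 = 3 * m := ⟨(q + 1) / 3, by omega⟩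
    have e : (q + 1) / 3 = m := by omega
    rw [e]
    have p1 : φ ^ q = φ⁻¹ := by
      rw [eq_inv_iff_mul_eq_one, ← pow_succ, hm, pow_mul, hφ3, one_pow]
    have p2 : φ⁻¹ ^ q = φ := by rw [inv_pow, p1, inv_inv]
    have cq : c ^ q = c ^ 2 := by
      apply mul_right_cancel₀ hc0
      rw [← pow_succ, ← pow_succ, hm, hc3, pow_mul, hc3, one_pow]
    rw [p1, cq] at hF1
    rw [p2, ← pow_mul, mul_comm 2 q, pow_mul, cq] at hF2
    have a1 : c ^ 2 * (l * f (jacobiSum χ χ)) ^ m = l := by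
      rw [← hJ1, ← pow_mul, ← hm, pow_succ g1]
      rw [← mul_assoc, hF1, ← hg, mul_comm]
    have a2 : c ^ 4 * (l * f (star (jacobiSum χ χ))) ^ m = l := by
      rw [← hJ2, ← pow_mul, ← hm, pow_succ g2]
      rw [← mul_assoc, show c ^ 4 = (c ^ 2) ^ 2 by ring, hF2, ← hg]
    apply mul_left_cancel₀ (pow_ne_zero m hl0)
    apply mul_left_cancel₀ hc0
    rw [mul_pow] at a1 a2
    have c4 : c ^ 4 = c := by rw [pow_succ, hc3, one_mul]
    rw [c4] at a2
    linear_combination a1 - a2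

end Perrin

namespace Perrin

lemma jac_norm {l : ℕ} [Fact l.Prime] {χ : MulChar (ZMod l) EZ} (hχ : orderOf χ = 3) :
    (jacobiSum χ χ).norm = l := by
  have hχ3 : χ ^ 3 = 1 := by rw [← hχ, pow_orderOf_eq_one]
  have hχ1 : χ ≠ 1 := by intro h; rw [h, orderOf_one] at hχ; omega
  have hinv : χ ^ 2 = χ⁻¹ := by
    rw [eq_inv_iff_mul_eq_one, ← pow_succ, hχ3]
  have hstar : χ⁻¹ = χ.ringHomComp cj := by
    rw [← hinv]
    refine MulChar.ext fun x => ?_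
    have h3 : (χ x) ^ 3 = 1 := by
      rw [← MulChar.pow_apply_coe, hχ3, MulChar.one_apply_coe]
    have h4 : cj (χ x) = χ x ^ 2 := star_cube h3
    simp [MulChar.pow_apply_coe, h4]
  let K := FractionRing EZ
  have hinj : Function.Injective (algebraMap EZ K) := IsFractionRing.injective EZ K
  let φ := χ.ringHomComp (algebraMap EZ K)
  have hφ1 : φ ≠ 1 := (MulChar.ringHomComp_ne_one_iff hinj).2 hχ1
  have hφ2 : φ * φ = χ⁻¹.ringHomComp (algebraMap EZ K) := by
    rw [← sq, ← hinv, MulChar.ringHomComp_pow]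
  have : CharZero K := charZero_of_injective_algebraMap hinj
  have h := jacobiSum_mul_jacobiSum_inv (F := ZMod l) (F' := K) (χ := φ) (φ := φ) (by
      rw [ringChar.eq_zero, ZMod.ringChar_zmod_n]; exact (Nat.Prime.ne_zero Fact.out).symm) hφ1 hφ1 (by
      rw [hφ2]; exact (MulChar.ringHomComp_ne_one_iff hinj).2 (by simpa using hχ1))
  have e : φ⁻¹ = (χ.ringHomComp cj).ringHomComp (algebraMap EZ K) := by
    rw [← hstar, ← MulChar.ringHomComp_inv]
  rw [e, jacobiSum_ringHomComp, jacobiSum_ringHomComp, jacobiSum_ringHomComp, ← map_mul, ZMod.card] at h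
  have h2 : jacobiSum χ χ * star (jacobiSum χ χ) = (l : EZ) := by
    apply hinj; rw [map_natCast]; exact h
  rw [← QuadraticAlgebra.algebraMap_norm_eq_mul_star] at h2
  have := congrArg QuadraticAlgebra.re h2
  simpa using this

lemma jac_primary {l : ℕ} [Fact l.Prime] (hl : l % 3 = 1) {χ : MulChar (ZMod l) EZ} (hχ : orderOf χ = 3) :
    (3 : ℤ) ∣ (jacobiSum χ χ).im := by
  have hχ3 : χ ^ 3 = 1 := by rw [← hχ, pow_orderOf_eq_one]
  obtain ⟨z, -, hz⟩ := exists_jacobiSum_eq_neg_one_add (n := 3) (by norm_num) hχ3 hχ3 (by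
    rw [ZMod.card]; omega) om_prim
  have : (om - 1) ^ 2 = -3 * om := by linear_combination om_sq
  have e : -1 + z * (-3 * om) = -1 - ((3 : ℤ) : EZ) * (z * om) := by push_cast; ring
  rw [hz, this, e]
  refine ⟨-(z * om).im, ?_⟩
  rw [QuadraticAlgebra.im_sub, QuadraticAlgebra.im_neg, QuadraticAlgebra.im_one, QuadraticAlgebra.im_mul,
    QuadraticAlgebra.re_intCast, QuadraticAlgebra.im_intCast]
  push_cast
  ring

lemma good_jac {l : ℕ} [Fact l.Prime] {χ : MulChar (ZMod l) EZ} (hχ : orderOf χ = 3) :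
    Good (jacobiSum χ χ) := by
  have hχ3 : χ ^ 3 = 1 := by rw [← hχ, pow_orderOf_eq_one]
  refine ⟨χ.toMonoidHom.comp (Int.castRingHom (ZMod l)), ?_, ?_, ?_⟩
  · intro m n h
    rw [jac_norm hχ] at h
    have := (ZMod.intCast_eq_intCast_iff_dvd_sub n m l).2 h
    simp [this]
  · intro n h
    rw [jac_norm hχ] at h
    have hu : IsUnit (n : ZMod l) := by
      rw [ZMod.coe_int_isUnit_iff_isCoprime]; exact h.symm
    change χ (n : ZMod l) ^ 3 = 1
    rw [← MulChar.pow_apply' _ (by norm_num), hχ3]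
    exact MulChar.one_apply hu
  · intro q _ hq h
    rw [jac_norm hχ] at h
    have := core_good hχ q hq (by
      rintro rfl
      have := Nat.isCoprime_iff_coprime.1 h
      simp at this
      exact (Nat.Prime.one_lt (Fact.out : q.Prime)).ne' this)
    simpa using this

lemma good_aux (n : ℕ) : ∀ th : EZ, th.norm.natAbs = n → (3 : ℤ) ∣ th.im → ¬ (3 : ℤ) ∣ th.re → Good th := by
  induction n using Nat.strong_induction_on with
  | _ n ih =>
  intro th hn h3 h3'
  by_cases hb : th.im = 0
  · have : th = ((th.re : ℤ) : EZ) := by ext <;> simp [hb]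
    rw [this]; exact Good.of_int _
  have hnn := EZ_norm th
  obtain ⟨b', hb'⟩ := h3
  have hb0 : b' ≠ 0 := by rintro rfl; simp [hb'] at hb
  have hN1 : 1 < th.norm := by
    have : 1 ≤ b' ^ 2 := by have := pow_pos (abs_pos.2 hb0) 2; rw [sq_abs] at this; omega
    rw [hnn, hb']; nlinarith [sq_nonneg (2 * th.re - 3 * b')]
  have hn1 : n ≠ 1 := by omega
  obtain ⟨q, hq, hqn⟩ := Nat.exists_prime_and_dvd hn1
  have hqN : (q : ℤ) ∣ th.norm := by
    rw [Int.natCast_dvd, hn]; exact hqn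
  have : Fact q.Prime := ⟨hq⟩
  have hqp : Prime (q : ℤ) := Nat.prime_iff_prime_int.1 hq
  have hq3 : q ≠ 3 := by
    rintro rfl
    apply h3'
    rw [hnn, hb'] at hqN
    have : (3 : ℤ) ∣ th.re ^ 2 := by
      have h : th.re ^ 2 = (th.re ^ 2 - th.re * (3 * b') + (3 * b') ^ 2) + 3 * (th.re * b' - 3 * b' ^ 2) := by ring
      rw [h]; exact dvd_add hqN (dvd_mul_right _ _)
    exact Int.prime_three.dvd_of_dvd_pow this
  by_cases hdiv : (q : ℤ) ∣ th.im
  · -- q divides th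
    have hre : (q : ℤ) ∣ th.re := by
      apply hqp.dvd_of_dvd_pow (n := 2)
      have h : th.re ^ 2 = th.norm + th.im * (th.re - th.im) := by rw [hnn]; ring
      rw [h]; exact dvd_add hqN (hdiv.mul_right _)
    obtain ⟨x, hx⟩ := hre
    obtain ⟨y, hy⟩ := hdiv
    have e : th = ((q : ℤ) : EZ) * ⟨x, y⟩ := by ext <;> simp [hx, hy]
    have hno : th.norm = (q : ℤ) ^ 2 * (⟨x, y⟩ : EZ).norm := by
      conv_lhs => rw [e]
      rw [map_mul, QuadraticAlgebra.norm_intCast]; simp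
    rw [e]
    refine (Good.of_int _).mul (ih _ ?_ _ rfl ?_ ?_)
    · rw [← hn, hno, Int.natAbs_mul]
      have h1 : 0 < (⟨x, y⟩ : EZ).norm.natAbs := by
        rw [Int.natAbs_pos]; rintro h; rw [h] at hno; omega
      have : 1 < ((q : ℤ) ^ 2).natAbs := by
        rw [Int.natAbs_pow, Int.natAbs_natCast]; exact Nat.one_lt_pow two_ne_zero hq.one_lt
      nlinarith
    · have : (3 : ℤ) ∣ q * y := by rw [← hy, hb']; exact dvd_mul_right _ _
      rcases Int.prime_three.dvd_or_dvd this with h | h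
      · exfalso; apply hq3
        exact ((Nat.prime_dvd_prime_iff_eq Nat.prime_three hq).1 (by exact_mod_cast h)).symm
      · exact h
    · intro h; apply h3'; rw [hx]; exact Dvd.dvd.mul_left h _
  · -- split prime
    have hq1 : q % 3 = 1 := by
      have hb2 : (th.im : ZMod q) ≠ 0 := by rwa [Ne, ZMod.intCast_zmod_eq_zero_iff_dvd]
      have hN : (th.re : ZMod q) ^ 2 - th.re * th.im + (th.im : ZMod q) ^ 2 = 0 := by
        have := (ZMod.intCast_zmod_eq_zero_iff_dvd th.norm q).2 hqN
        rw [hnn] at this; push_cast at this; exact this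
      set w : ZMod q := - th.re / th.im with hw
      have hw2 : w ^ 2 + w + 1 = 0 := by
        rw [hw]; field_simp; linear_combination hN
      have hw3 : w ^ 3 = 1 := by linear_combination (w - 1) * hw2
      have hw1 : w ≠ 1 := by
        intro h; rw [h] at hw2
        have : ((3 : ℕ) : ZMod q) = 0 := by push_cast; linear_combination hw2
        rw [ZMod.natCast_eq_zero_iff] at this
        exact hq3 ((Nat.prime_dvd_prime_iff_eq hq Nat.prime_three).1 this)
      have ho := orderOf_eq_prime hw3 hw1
      have hw0 : w ≠ 0 := by rintro h; simp [h] at hw3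
      have := orderOf_dvd_of_pow_eq_one (ZMod.pow_card_sub_one_eq_one hw0)
      rw [ho] at this
      have := hq.two_le
      omega
    obtain ⟨χ, hχ⟩ := MulChar.exists_mulChar_orderOf (F := ZMod q) (R := EZ) (n := 3) (by
      rw [ZMod.card]; omega) om_prim
    have hJn := jac_norm hχ
    have hJg := good_jac hχ
    have hJp := jac_primary hq1 hχ
    set J := jacobiSum χ χ
    -- general: if J' with norm q, primary, good, and q | im (th * star J') then done
    have key : ∀ J' : EZ, J'.norm = q → Good J' → (3 : ℤ) ∣ J'.im → (q : ℤ) ∣ (th * star J').im → Good th := by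
      intro J' hn' hg' hp' hd
      have hno : (th * star J').norm = th.norm * q := by
        rw [map_mul, QuadraticAlgebra.norm_star, hn']
      have hre : (q : ℤ) ∣ (th * star J').re := by
        apply hqp.dvd_of_dvd_pow (n := 2)
        have h := EZ_norm (th * star J')
        have h' : (th * star J').re ^ 2 = (th * star J').norm +
          (th * star J').im * ((th * star J').re - (th * star J').im) := by rw [h]; ring
        rw [h', hno]; exact dvd_add (dvd_mul_left _ _) (hd.mul_right _)
      obtain ⟨x, hx⟩ := hre
      obtain ⟨y, hy⟩ := hd
      have e0 : th * star J' = ((q : ℤ) : EZ) * ⟨x, y⟩ := by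
        apply QuadraticAlgebra.ext
        · rw [hx]; simp
        · rw [hy]; simp
      have hjj : J' * star J' = ((q : ℤ) : EZ) := by
        rw [← QuadraticAlgebra.algebraMap_norm_eq_mul_star, hn']; rfl
      have hq0 : ((q : ℤ) : EZ) ≠ 0 := by
        intro h; have := congrArg QuadraticAlgebra.re h; simp at this; exact hq.ne_zero this
      have e : th = J' * ⟨x, y⟩ := by
        apply mul_right_cancel₀ hq0
        calc th * ((q : ℤ) : EZ) = (th * star J') * J' := by rw [← hjj]; ring
          _ = _ := by rw [e0]; ring
      have hno2 : th.norm = q * (⟨x, y⟩ : EZ).norm := by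
        conv_lhs => rw [e]
        rw [map_mul, hn']
      have hre2 : th.re = J'.re * x - J'.im * y := by
        rw [e]; simp; ring
      have him2 : th.im = J'.re * y + J'.im * x - J'.im * y := by
        rw [e]; simp; ring
      obtain ⟨j, hj⟩ := hp'
      rw [hj] at hre2 him2
      have h3y : (3 : ℤ) ∣ y := by
        have : (3 : ℤ) ∣ J'.re * y := by
          refine ⟨b' - j * x + j * y, ?_⟩
          linear_combination hb' - him2
        rcases Int.prime_three.dvd_or_dvd this with h | h
        · exfalso; apply h3'
          rw [hre2]
          exact dvd_sub (h.mul_right _) ⟨j * y, by ring⟩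
        · exact h
      rw [e]
      refine hg'.mul (ih _ ?_ _ rfl h3y ?_)
      · rw [← hn, hno2, Int.natAbs_mul, Int.natAbs_natCast]
        have h1 : 0 < (⟨x, y⟩ : EZ).norm.natAbs := by
          rw [Int.natAbs_pos]; rintro h; rw [h] at hno2; omega
        have := hq.one_lt
        nlinarith
      · intro h; apply h3'
        rw [hre2]
        change (3 : ℤ) ∣ x at h
        exact dvd_sub (h.mul_left _) ⟨j * y, by ring⟩
    have hJn' := EZ_norm J
    rw [hJn] at hJn'
    have : (q : ℤ) ∣ (th.re * J.im - th.im * J.re) * (th.re * J.im + th.im * J.re - th.im * J.im) := by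
      have h : (th.re * J.im - th.im * J.re) * (th.re * J.im + th.im * J.re - th.im * J.im)
        = J.im ^ 2 * th.norm - th.im ^ 2 * q := by rw [hJn', hnn]; ring
      rw [h]; exact dvd_sub (hqN.mul_left _) (dvd_mul_left _ _)
    rcases hqp.dvd_or_dvd this with h | h
    · refine key J hJn hJg hJp ?_
      have : (th * star J).im = -(th.re * J.im - th.im * J.re) := by simp; ring
      rw [this]; exact (dvd_neg).2 h
    · refine key (star J) (by rw [QuadraticAlgebra.norm_star, hJn]) hJg.star (by simpa using hJp) ?_
      have : (th * star (star J)).im = th.re * J.im + th.im * J.re - th.im * J.im := by simp; ring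
      rw [this]; exact h

lemma good_of_primary (th : EZ) (h : (3 : ℤ) ∣ th.im) (h' : ¬ (3 : ℤ) ∣ th.re) : Good th :=
  good_aux _ th rfl h h'

end Perrin

namespace Perrin

lemma zeta_aux {F : Type*} [Field F] {a b z : F} (hab : a ^ 3 ≠ b ^ 3) (hz : z ^ 3 = 1) :
    z * a + z ^ 2 * b = a + b ↔ z = 1 := by
  constructor
  · intro h
    by_contra hne
    have h1 : (z - 1) * (z ^ 2 + z + 1) = 0 := by linear_combination hz
    have h2 : z ^ 2 + z + 1 = 0 := (mul_eq_zero.1 h1).resolve_left (sub_ne_zero.2 hne)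
    have h3 : (z - 1) * (a + (z + 1) * b) = 0 := by linear_combination h
    have h4 : a + (z + 1) * b = 0 := (mul_eq_zero.1 h3).resolve_left (sub_ne_zero.2 hne)
    apply hab
    have : a = z ^ 2 * b := by linear_combination h4 - b * h2
    rw [this]
    linear_combination (z ^ 3 + 1) * b ^ 3 * hz
  · rintro rfl; ring

lemma frob_equiv {F : Type*} [Field F] {p m : ℕ} [Fact p.Prime] [CharP F p] {a b : F} (ha : a ≠ 0) (hb : b ≠ 0)
    (habp : (a * b) ^ p = a * b) (hab : a ^ 3 ≠ b ^ 3)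
    (h : (3 * m + 1 = p ∧ (a ^ 3) ^ p = a ^ 3) ∨ (3 * m = p + 1 ∧ (a ^ 3) ^ p = b ^ 3)) :
    ((a + b) ^ p = a + b ↔ a ^ (3 * m) = b ^ (3 * m)) ∧
    ((a + b) ^ p = a + b ↔ a ^ (3 * (2 * m)) = b ^ (3 * (2 * m))) := by
  have key : ∃ z c : F, z ^ 3 = 1 ∧ c ≠ 0 ∧ a ^ (3 * m) = z * c ∧ b ^ (3 * m) = z ^ 2 * c ∧
      ((a + b) ^ p = a + b ↔ z = 1) := by
    rw [add_pow_char]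
    have hap : a ^ p ≠ 0 := pow_ne_zero _ ha
    rw [mul_pow] at habp
    rcases h with ⟨hm, h3⟩ | ⟨hm, h3⟩
    · have hz : (a ^ p / a) ^ 3 = 1 := by
        rw [div_pow, ← pow_mul, mul_comm p 3, pow_mul, h3]; field_simp
      have hbp : b ^ p = (a ^ p / a) ^ 2 * b := by
        have : b ^ p = a * b / a ^ p := by rw [← habp]; field_simp
        rw [this]
        have e : (a ^ p) ^ 3 = a ^ 3 := by rw [← pow_mul, mul_comm p 3, pow_mul, h3]
        field_simp
        exact e.symm
      have hap' : a ^ p = (a ^ p / a) * a := by field_simp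
      refine ⟨a ^ p / a, 1, hz, one_ne_zero, ?_, ?_, ?_⟩
      · rw [mul_one, eq_div_iff ha, ← pow_succ, hm]
      · rw [mul_one]; apply mul_right_cancel₀ hb; rw [← pow_succ, hm]; exact hbp
      · have := zeta_aux hab hz
        rw [← this, ← hap', ← hbp]
    · have e : (a ^ p) ^ 3 = b ^ 3 := by rw [← pow_mul, mul_comm p 3, pow_mul, h3]
      have hz : (a ^ p / b) ^ 3 = 1 := by
        rw [div_pow, e]; field_simp
      have hap' : a ^ p = (a ^ p / b) * b := by field_simp
      have hbp : b ^ p = (a ^ p / b) ^ 2 * a := by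
        have : b ^ p = a * b / a ^ p := by rw [← habp]; field_simp
        rw [this]
        field_simp
        exact e.symm
      refine ⟨a ^ p / b, a * b, hz, mul_ne_zero ha hb, ?_, ?_, ?_⟩
      · rw [hm, pow_succ]; field_simp
      · rw [hm, pow_succ, hbp]; ring
      · have := zeta_aux hab.symm hz
        rw [← hap', ← hbp] at this
        rw [← this, add_comm b a]
  obtain ⟨z, c, hz, hc, h1, h2, h3⟩ := key
  have hz0 : z ≠ 0 := by rintro rfl; simp at hz
  rw [h3, show 3 * (2 * m) = (3 * m) * 2 by ring, pow_mul a (3 * m) 2, pow_mul b (3 * m) 2, h1, h2]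
  constructor
  · constructor
    · rintro rfl; ring
    · intro h
      have : z * c * (z - 1) = 0 := by linear_combination -h
      have := (mul_eq_zero.1 this).resolve_left (mul_ne_zero hz0 hc)
      exact sub_eq_zero.1 this
  · constructor
    · rintro rfl; ring
    · intro h
      have : z * c ^ 2 * (z - 1) = 0 := by linear_combination h + z * c ^ 2 * hz
      have := (mul_eq_zero.1 this).resolve_left (mul_ne_zero hz0 (pow_ne_zero 2 hc))
      exact sub_eq_zero.1 this

lemma mem_prime_field {p : ℕ} [Fact p.Prime] {F : Type*} [Field F] [CharP F p] [Algebra (ZMod p) F] {x : F} (h : x ^ p = x) :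
    ∃ y : ZMod p, algebraMap (ZMod p) F y = x := by
  classical
  by_contra hne
  push Not at hne
  let P : Polynomial F := Polynomial.X ^ p - Polynomial.X
  have hp1 : 1 < p := Nat.Prime.one_lt Fact.out
  have hP : P ≠ 0 := FiniteField.X_pow_card_sub_X_ne_zero F hp1
  have hdeg : P.natDegree = p := FiniteField.X_pow_card_sub_X_natDegree_eq F hp1
  let S : Finset F := insert x (Finset.univ.image (algebraMap (ZMod p) F))
  have hS : S.card = p + 1 := by
    rw [Finset.card_insert_of_notMem, Finset.card_image_of_injective _ (algebraMap (ZMod p) F).injective]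
    · simp [ZMod.card]
    · simp; exact hne
  have hsub : S.val ⊆ P.roots := by
    intro y hy
    rw [Polynomial.mem_roots hP]
    have hy : y ∈ S := hy
    simp only [S, Finset.mem_insert, Finset.mem_image, Finset.mem_univ, true_and] at hy
    rcases hy with rfl | ⟨y, rfl⟩
    · simp [P, h]
    · simp [P, ← map_pow, ZMod.pow_card]
  have := Polynomial.card_le_degree_of_subset_roots hsub
  omega

/-- the main link -/
lemma link {p m : ℕ} [Fact p.Prime] {F : Type*} [Field F] [CharP F p] [Algebra (ZMod p) F] [IsAlgClosed F] (hp2 : p ≠ 2) (hp3 : p ≠ 3) (hp23 : p ≠ 23)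
    {w t : F} (hw : w ^ 2 + w + 1 = 0) (ht : t ^ 2 = -23) (htp : t ^ p = t)
    (hm : (3 * m + 1 = p) ∨ (3 * m = p + 1)) :
    ((∃ x : ZMod p, x ^ 3 - x - 1 = 0) ↔ (t - 3 * (1 + 2 * w)) ^ m = (t + 3 * (1 + 2 * w)) ^ m) ∧
    ((∃ x : ZMod p, x ^ 3 - x - 1 = 0) ↔ (25 + 3 * (1 + 2 * w) * t) ^ m = (25 - 3 * (1 + 2 * w) * t) ^ m) := by
  have hpp : p.Prime := Fact.out
  have cne : ∀ q : ℕ, q.Prime → p ≠ q → (q : F) ≠ 0 := by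
    intro q hq hne h
    rw [CharP.cast_eq_zero_iff F p] at h
    exact hne ((Nat.prime_dvd_prime_iff_eq hpp hq).1 h)
  have n2 : (2 : F) ≠ 0 := by simpa using cne 2 Nat.prime_two hp2
  have n3 : (3 : F) ≠ 0 := by simpa using cne 3 Nat.prime_three hp3
  have n23 : (23 : F) ≠ 0 := by simpa using cne 23 (by norm_num) hp23
  have n18 : (18 : F) ≠ 0 := by
    rw [show (18 : F) = 2 * 3 * 3 by norm_num]; exact mul_ne_zero (mul_ne_zero n2 n3) n3
  have n12 : (12 : F) ≠ 0 := by
    rw [show (12 : F) = 2 * 2 * 3 by norm_num]; exact mul_ne_zero (mul_ne_zero n2 n2) n3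
  have hw3 : w ^ 3 = 1 := by linear_combination (w - 1) * hw
  set s : F := 1 + 2 * w with hs
  have hs2 : s ^ 2 = -3 := by rw [hs]; linear_combination 4 * hw
  have hs0 : s ≠ 0 := by rintro h; rw [h] at hs2; apply n3; linear_combination hs2
  have ht0 : t ≠ 0 := by rintro h; rw [h] at ht; apply n23; linear_combination ht
  have hprod : (9 + s * t) * (9 - s * t) = 12 := by linear_combination -t ^ 2 * hs2 + 3 * ht
  have h9 : (9 + s * t) ≠ 0 := left_ne_zero_of_mul (hprod ▸ n12)
  have hmev : Even m := by
    have := hpp.eq_two_or_odd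
    rw [Nat.even_iff]; omega
  have natp : ∀ k : ℕ, (k : F) ^ p = k := fun k => by
    rw [← map_natCast (algebraMap (ZMod p) F), ← map_pow, ZMod.pow_card]
  have p9 : (9 : F) ^ p = 9 := by exact_mod_cast natp 9
  have p18 : (18 : F) ^ p = 18 := by exact_mod_cast natp 18
  have p3 : (3 : F) ^ p = 3 := by exact_mod_cast natp 3
  have p2 : (2 : F) ^ p = 2 := by exact_mod_cast natp 2
  have hsp : s ^ p = 1 + 2 * w ^ p := by rw [hs, add_pow_char, mul_pow, p2, one_pow]
  -- frobenius
  have core : ∀ a b : F, 3 * (a * b) = 1 → 18 * a ^ 3 = 9 + s * t → 18 * b ^ 3 = 9 - s * t →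
     ((a + b) ^ p = a + b ↔ (9 + s * t) ^ m = (9 - s * t) ^ m) ∧
     ((a + b) ^ p = a + b ↔ (9 + s * t) ^ (2 * m) = (9 - s * t) ^ (2 * m)) := by
    intro a b h1 h2 h3
    have ha : a ≠ 0 := by rintro rfl; simp at h1
    have hb : b ≠ 0 := by rintro rfl; simp at h1
    have habp : (a * b) ^ p = a * b := by
      apply mul_left_cancel₀ n3
      rw [h1, ← p3, ← mul_pow, h1, one_pow]
    have hab : a ^ 3 ≠ b ^ 3 := by
      intro h
      have : 2 * (s * t) = 0 := by linear_combination 18 * h - h2 + h3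
      exact mul_ne_zero n2 (mul_ne_zero hs0 ht0) this
    have hap : 18 * (a ^ 3) ^ p = 9 + s ^ p * t := by
      have := congrArg (· ^ p) h2
      simp only [mul_pow, add_pow_char, p9, p18, htp] at this
      rw [this]
    have H := frob_equiv (m := m) ha hb habp hab (by
      rcases hm with hm | hm
      · left; refine ⟨hm, ?_⟩
        have : w ^ p = w := by rw [← hm, pow_succ, pow_mul, hw3, one_pow, one_mul]
        rw [hsp, this, ← hs, ← h2] at hap
        exact mul_left_cancel₀ n18 hap
      · right; refine ⟨hm, ?_⟩
        have hw0 : w ≠ 0 := by rintro h; simp [h] at hw3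
        have : w ^ p = w ^ 2 := by
          apply mul_right_cancel₀ hw0
          rw [← pow_succ, ← hm, pow_mul, hw3, one_pow, ← pow_succ, hw3]
        rw [hsp, this] at hap
        apply mul_left_cancel₀ n18
        rw [hap, h3, hs]; linear_combination 2 * t * hw)
    rw [H.1]
    rw [H.1] at H
    have e : ∀ k : ℕ, a ^ (3 * k) = b ^ (3 * k) ↔ (9 + s * t) ^ k = (9 - s * t) ^ k := by
      intro k
      rw [← h2, ← h3, mul_pow, mul_pow, pow_mul, pow_mul]
      exact (mul_right_inj' (pow_ne_zero k n18)).symm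
    exact ⟨e m, H.2.trans (e (2 * m))⟩
  obtain ⟨a, ha⟩ : ∃ a : F, a ^ 3 = (9 + s * t) / 18 := IsAlgClosed.exists_pow_nat_eq _ (by norm_num)
  have ha0 : a ≠ 0 := by
    rintro rfl
    have : (9 + s * t) / 18 ≠ 0 := div_ne_zero h9 n18
    apply this; rw [← ha]; simp
  set b : F := 1 / (3 * a) with hb
  have hab1 : 3 * (a * b) = 1 := by rw [hb]; field_simp
  have ha18 : 18 * a ^ 3 = 9 + s * t := by rw [ha]; field_simp
  have hb18 : 18 * b ^ 3 = 9 - s * t := by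
    apply mul_left_cancel₀ h9
    rw [hprod, ← ha18]
    have : (3 * (a * b)) ^ 3 = 1 := by rw [hab1, one_pow]
    linear_combination 12 * this
  have main : (∃ x : ZMod p, x ^ 3 - x - 1 = 0) ↔
     ∃ a b : F, 3 * (a * b) = 1 ∧ 18 * a ^ 3 = 9 + s * t ∧ 18 * b ^ 3 = 9 - s * t ∧ (a + b) ^ p = a + b := by
    constructor
    · rintro ⟨x, hx⟩
      set y := algebraMap (ZMod p) F x with hy
      have hyp : y ^ p = y := by rw [hy, ← map_pow, ZMod.pow_card]
      have hy3 : y ^ 3 - y - 1 = 0 := by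
        have := congrArg (algebraMap (ZMod p) F) hx
        simpa using this
      have hsum : a ^ 3 + b ^ 3 = 1 := by
        apply mul_left_cancel₀ n18; linear_combination ha18 + hb18
      have : (y - (a + b)) * ((y - (w * a + w ^ 2 * b)) * (y - (w ^ 2 * a + w * b))) = 0 := by
        have e : (y - (w * a + w ^ 2 * b)) * (y - (w ^ 2 * a + w * b)) = y ^ 2 + (a + b) * y + a ^ 2 - a * b + b ^ 2 := by
          have w4 : w ^ 4 = w := by linear_combination w * hw3
          linear_combination (-y * (a + b) + a * b) * hw + (a ^ 2 + b ^ 2 + 0) * hw3 + a * b * w4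
        rw [e]
        linear_combination hy3 - hsum - y * hab1
      rcases mul_eq_zero.1 this with h | h
      · refine ⟨a, b, hab1, ha18, hb18, ?_⟩
        rw [← sub_eq_zero.1 h, hyp]
      rcases mul_eq_zero.1 h with h | h
      · refine ⟨w * a, w ^ 2 * b, ?_, ?_, ?_, ?_⟩
        · linear_combination hab1 + 3 * a * b * hw3
        · linear_combination ha18 + 18 * a ^ 3 * hw3
        · linear_combination hb18 + 18 * b ^ 3 * (w ^ 3 + 1) * hw3
        · rw [← sub_eq_zero.1 h, hyp]
      · refine ⟨w ^ 2 * a, w * b, ?_, ?_, ?_, ?_⟩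
        · linear_combination hab1 + 3 * a * b * hw3
        · linear_combination ha18 + 18 * a ^ 3 * (w ^ 3 + 1) * hw3
        · linear_combination hb18 + 18 * b ^ 3 * hw3
        · rw [← sub_eq_zero.1 h, hyp]
    · rintro ⟨a, b, h1, h2, h3, h4⟩
      obtain ⟨x, hx⟩ := mem_prime_field h4
      refine ⟨x, (algebraMap (ZMod p) F).injective ?_⟩
      have hsum : a ^ 3 + b ^ 3 = 1 := by
        apply mul_left_cancel₀ n18; linear_combination h2 + h3
      simp only [map_sub, map_pow, map_one, map_zero, hx]
      linear_combination hsum + (a + b) * h1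
  have M : ((∃ x : ZMod p, x ^ 3 - x - 1 = 0) ↔ (9 + s * t) ^ m = (9 - s * t) ^ m) ∧
     ((∃ x : ZMod p, x ^ 3 - x - 1 = 0) ↔ (9 + s * t) ^ (2 * m) = (9 - s * t) ^ (2 * m)) := by
    rw [main]
    constructor
    · constructor
      · rintro ⟨a, b, h1, h2, h3, h4⟩; exact (core a b h1 h2 h3).1.1 h4
      · intro h; exact ⟨a, b, hab1, ha18, hb18, (core a b hab1 ha18 hb18).1.2 h⟩
    · constructor
      · rintro ⟨a, b, h1, h2, h3, h4⟩; exact (core a b h1 h2 h3).2.1 h4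
      · intro h; exact ⟨a, b, hab1, ha18, hb18, (core a b hab1 ha18 hb18).2.2 h⟩
  refine ⟨M.1.trans ?_, M.2.trans ?_⟩
  · have e1 : s * (9 + s * t) = (-3) * (t - 3 * s) := by linear_combination t * hs2
    have e2 : (-s) * (9 - s * t) = (-3) * (t + 3 * s) := by linear_combination t * hs2
    have f1 := congrArg (· ^ m) e1
    have f2 := congrArg (· ^ m) e2
    simp only [mul_pow, hmev.neg_pow] at f1 f2
    rw [← mul_right_inj' (pow_ne_zero m hs0), f1, f2]
    exact mul_right_inj' (pow_ne_zero m n3)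
  · have n6 : (6 : F) ≠ 0 := by
      rw [show (6 : F) = 2 * 3 by norm_num]; exact mul_ne_zero n2 n3
    have e1 : (9 + s * t) ^ 2 = 6 * (25 + 3 * s * t) := by linear_combination t ^ 2 * hs2 - 3 * ht
    have e2 : (9 - s * t) ^ 2 = 6 * (25 - 3 * s * t) := by linear_combination t ^ 2 * hs2 - 3 * ht
    rw [pow_mul, pow_mul, e1, e2, mul_pow, mul_pow]
    exact mul_right_inj' (pow_ne_zero m n6)

end Perrin

namespace Perrin

lemma exists_hom (F : Type) [Field F] [IsAlgClosed F] : ∃ (f : EZ →+* F) (w : F), w ^ 2 + w + 1 = 0 ∧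
    (∀ z : EZ, f z = z.re + z.im * w) ∧ (∀ z : EZ, f (star z) = z.re - z.im - z.im * w) := by
  obtain ⟨w, hw⟩ : ∃ w : F, w ^ 2 + w + 1 = 0 := by
    have := IsAlgClosed.exists_root (Polynomial.X ^ 2 + Polynomial.X + 1 : Polynomial F) (by
      have : (Polynomial.X ^ 2 + Polynomial.X + 1 : Polynomial F).degree = 2 := by compute_degree!
      rw [this]; norm_num)
    obtain ⟨w, h⟩ := this
    exact ⟨w, by simpa [Polynomial.IsRoot] using h⟩
  have hu : w * w = (-1 : ℤ) • (1 : F) + (-1 : ℤ) • w := by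
    simp only [neg_smul, one_smul]; linear_combination hw
  let g := QuadraticAlgebra.lift (R := ℤ) (A := F) ⟨w, hu⟩
  have hg : ∀ z : EZ, g z = z.re + z.im * w := by
    intro z
    change z.re • (1 : F) + z.im • w = _
    simp
  refine ⟨g.toRingHom, w, hw, hg, ?_⟩
  intro z
  refine (hg _).trans ?_
  simp
  ring

lemma hom_om_ne {q : ℕ} [Fact q.Prime] {F : Type*} [Field F] [CharP F q] (hq3 : q ≠ 3)
    (f : EZ →+* F) {c : EZ} (hc : c ^ 3 = 1) (h : f c = 1) : c = 1 := by
  have n3 : (3 : F) ≠ 0 := by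
    intro h
    have : ((3 : ℕ) : F) = 0 := by exact_mod_cast h
    rw [CharP.cast_eq_zero_iff F q] at this
    exact hq3 ((Nat.prime_dvd_prime_iff_eq Fact.out Nat.prime_three).1 this)
  have ho : f om ^ 2 + f om + 1 = 0 := by
    have := congrArg f om_sq
    simpa using this
  obtain ⟨i, hi, rfl⟩ := om_prim.eq_pow_of_pow_eq_one hc
  interval_cases i
  · simp
  · exfalso; apply n3
    simp only [pow_one] at h
    rw [h] at ho; linear_combination ho
  · exfalso; apply n3
    rw [map_pow] at h
    have h1 : f om = -2 := by linear_combination ho - h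
    rw [h1] at h; linear_combination h

lemma cop_ne {q : ℕ} [Fact q.Prime] {F : Type*} [Field F] [CharP F q] {n : ℤ} (h : IsCoprime (q : ℤ) n) : (n : F) ≠ 0 := by
  intro h0
  obtain ⟨a, b, hab⟩ := h
  have := congrArg (Int.cast : ℤ → F) hab
  simp [h0] at this

lemma rel_iff {q m : ℕ} [Fact q.Prime] (hq3 : q ≠ 3) (hm : 3 * m + 1 = q ∨ 3 * m = q + 1) {th c : EZ}
    (hR : Rel th c q) (hc : c ^ 3 = 1) (hcop : IsCoprime (q : ℤ) th.norm) (f : EZ →+* AlgebraicClosure (ZMod q)) :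
    f th ^ m = f (star th) ^ m ↔ c = 1 := by
  have hN : f th * f (star th) ≠ 0 := by
    rw [← map_mul, ← QuadraticAlgebra.algebraMap_norm_eq_mul_star th]
    have := cop_ne (F := AlgebraicClosure (ZMod q)) hcop
    simpa using this
  have h1 := pow_ne_zero m (left_ne_zero_of_mul hN)
  have h2 := pow_ne_zero m (right_ne_zero_of_mul hN)
  constructor
  · intro h
    apply hom_om_ne hq3 f hc
    rcases hm with hm | hm
    · have := (hR f).1 (by omega)
      rw [show (q - 1) / 3 = m by omega, h] at this
      exact mul_right_cancel₀ h2 (by rw [one_mul]; exact this.symm)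
    · have := (hR f).2 (by omega)
      rw [show (q + 1) / 3 = m by omega, h] at this
      exact mul_right_cancel₀ h2 (by rw [one_mul]; exact this)
  · rintro rfl
    rcases hm with hm | hm
    · have := (hR f).1 (by omega)
      rwa [show (q - 1) / 3 = m by omega, map_one, one_mul] at this
    · have := (hR f).2 (by omega)
      rwa [show (q + 1) / 3 = m by omega, map_one, one_mul] at this

lemma exists_m {q : ℕ} [Fact q.Prime] (hq3 : q ≠ 3) : ∃ m, 3 * m + 1 = q ∨ 3 * m = q + 1 := by
  have hq : q.Prime := Fact.out
  have : ¬ 3 ∣ q := fun h => hq3 ((Nat.prime_dvd_prime_iff_eq Nat.prime_three hq).1 h).symm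
  rcases (show q % 3 = 1 ∨ q % 3 = 2 by omega) with h | h
  · exact ⟨(q - 1) / 3, by omega⟩
  · exact ⟨(q + 1) / 3, by omega⟩

lemma chi_one {q : ℕ} [Fact q.Prime] (hq3 : q ≠ 3) {th c : EZ}
    (hR : Rel th c q) (hc : c ^ 3 = 1) (hcop : IsCoprime (q : ℤ) th.norm) (htr : (q : ℤ) ∣ 2 * th.re - th.im) : c = 1 := by
  obtain ⟨m, hm⟩ := exists_m hq3
  obtain ⟨f, w, hw, h1, h2⟩ := exists_hom (AlgebraicClosure (ZMod q))
  rw [← rel_iff hq3 hm hR hc hcop f]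
  have htr' : (2 * th.re - th.im : AlgebraicClosure (ZMod q)) = 0 := by
    have := (CharP.intCast_eq_zero_iff (AlgebraicClosure (ZMod q)) q _).2 htr
    exact_mod_cast this
  have hneg : f th = - f (star th) := by
    rw [h1, h2]; linear_combination htr'
  rcases eq_or_ne q 2 with rfl | hq2
  · have : m = 1 := by omega
    subst this
    rw [pow_one, pow_one, hneg]
    exact CharTwo.neg_eq _
  · have hmev : Even m := by
      have := (Fact.out : q.Prime).eq_two_or_odd
      rw [Nat.even_iff]; omega
    rw [hneg, hmev.neg_pow]

lemma chi_nat (χ : ℤ →* EZ) (n : ℕ) (h0 : n ≠ 0) : (∀ q : ℕ, q.Prime → q ∣ n → χ q = 1) → χ n = 1 := by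
  induction n using induction_on_primes with
  | zero => exact absurd rfl h0
  | one => intro _; simp
  | prime_mul p a hp ih =>
    intro h
    have ha : a ≠ 0 := by rintro rfl; simp at h0
    rw [Nat.cast_mul, map_mul, h p hp (dvd_mul_right _ _), ih ha (fun q hq hd => h q hq (hd.mul_left _)), one_mul]

lemma chi_neg_one (χ : ℤ →* EZ) (h : χ (-1) ^ 3 = 1) : χ (-1) = 1 := by
  have h2 : χ (-1) ^ 2 = 1 := by rw [← map_pow]; simp
  calc χ (-1) = χ (-1) ^ 2 * χ (-1) := by rw [h2, one_mul]
    _ = 1 := by rw [← pow_succ, h]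

lemma chi_k {th : EZ} {n k : ℤ} (h : (3 : ℤ) ∣ th.im) (h' : ¬ (3 : ℤ) ∣ th.re) (htr : n ∣ 2 * th.re - th.im)
    (h3 : ¬ (3 : ℤ) ∣ n) (hcop : IsCoprime n th.norm) (hk : th.norm ∣ 27 * k - n ^ 2 ∨ th.norm ∣ 27 * k - (-1) * n ^ 2) :
    ∃ χ : ℤ →* EZ, χ k = 1 ∧ (∀ n : ℤ, IsCoprime n th.norm → χ n ^ 3 = 1) ∧
    ∀ (q : ℕ) [Fact q.Prime], q ≠ 3 → IsCoprime (q : ℤ) th.norm → Rel th (χ q) q := by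
  obtain ⟨χ, g1, g2, g3⟩ := good_of_primary th h h'
  refine ⟨χ, ?_, g2, g3⟩
  have hm1 := chi_neg_one χ (g2 _ (isCoprime_one_left.neg_left))
  have hnat : χ (n.natAbs : ℤ) = 1 := by
    apply chi_nat
    · rintro h0
      simp only [Int.natAbs_eq_zero] at h0
      exact h3 (h0 ▸ dvd_zero _)
    · intro q hq hd
      have := Fact.mk hq
      have hqn : (q : ℤ) ∣ n := Int.natCast_dvd.2 hd
      have hc : IsCoprime (q : ℤ) th.norm := hcop.of_isCoprime_of_dvd_left hqn
      have hq3 : q ≠ 3 := by rintro rfl; exact h3 hqn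
      exact chi_one hq3 (g3 q hq3 hc) (g2 _ hc) hc (hqn.trans htr)
  have hn2 : χ (n ^ 2) = 1 := by
    rw [← Int.natAbs_sq, map_pow, hnat, one_pow]
  have c3 : IsCoprime (3 : ℤ) th.norm := by
    rw [Prime.coprime_iff_not_dvd Int.prime_three]
    intro hd
    apply h'
    rw [EZ_norm] at hd
    have : (3 : ℤ) ∣ th.re ^ 2 := by
      have : th.re ^ 2 = (th.re ^ 2 - th.re * th.im + th.im ^ 2) + th.im * (th.re - th.im) := by ring
      rw [this]; exact dvd_add hd (h.mul_right _)
    exact Int.prime_three.dvd_of_dvd_pow this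
  have h27 : χ 27 = 1 := by
    have := g2 _ c3
    rw [← map_pow] at this; norm_num at this; exact this
  have : χ (27 * k) = 1 := by
    rcases hk with hk | hk
    · rw [g1 _ _ hk, hn2]
    · rw [g1 _ _ hk, map_mul, hm1, hn2, one_mul]
  rwa [map_mul, h27, one_mul] at this

lemma final_iff {p : ℕ} [Fact p.Prime] (hp2 : p ≠ 2) (hp3 : p ≠ 3) (hp23 : p ≠ 23) {X Y r : ℤ}
    (hXY : (p : ℤ) ∣ X ^ 2 + 23 * Y ^ 2) (hY : IsCoprime (p : ℤ) Y) (hr : IsCoprime (p : ℤ) r) {th c : EZ}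
    (hth : (r * th.re = X - 3 * Y ∧ r * th.im = - 6 * Y) ∨ (r * th.re = 25 * Y + 3 * X ∧ r * th.im = 6 * X))
    (hR : Rel th c p) (hc : c ^ 3 = 1) (hcop : IsCoprime (p : ℤ) th.norm) :
    (∃ x : ZMod p, x ^ 3 - x - 1 = 0) ↔ c = 1 := by
  obtain ⟨m, hm⟩ := exists_m hp3
  obtain ⟨f, w, hw, h1, h2⟩ := exists_hom (AlgebraicClosure (ZMod p))
  rw [← rel_iff hp3 hm hR hc hcop f]
  have hY0 := cop_ne (F := AlgebraicClosure (ZMod p)) hY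
  have hr0 := cop_ne (F := AlgebraicClosure (ZMod p)) hr
  have e0 : (X ^ 2 + 23 * Y ^ 2 : AlgebraicClosure (ZMod p)) = 0 := by
    have := (CharP.intCast_eq_zero_iff (AlgebraicClosure (ZMod p)) p _).2 hXY
    exact_mod_cast this
  have ip : ∀ k : ℤ, (k : AlgebraicClosure (ZMod p)) ^ p = k := fun k => by
    rw [← map_intCast (algebraMap (ZMod p) (AlgebraicClosure (ZMod p))), ← map_pow, ZMod.pow_card]
  obtain ⟨t, ht⟩ : ∃ t : AlgebraicClosure (ZMod p), t * Y = X := ⟨X / Y, by field_simp⟩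
  have ht2 : t ^ 2 = -23 := by
    apply mul_right_cancel₀ (pow_ne_zero 2 hY0)
    rw [← mul_pow, ht]; linear_combination e0
  have htp : t ^ p = t := by
    apply mul_right_cancel₀ hY0
    nth_rw 1 [← ip Y]
    rw [← mul_pow, ht, ip]
  have L := link hp2 hp3 hp23 hw ht2 htp hm
  have hrY : ∀ a b : AlgebraicClosure (ZMod p), r * f th = Y * a → r * f (star th) = Y * b →
      (f th ^ m = f (star th) ^ m ↔ a ^ m = b ^ m) := by
    intro a b ha hb
    rw [← mul_right_inj' (pow_ne_zero m hr0), ← mul_pow, ← mul_pow, ha, hb, mul_pow, mul_pow]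
    exact mul_right_inj' (pow_ne_zero m hY0)
  rcases hth with ⟨k1, k2⟩ | ⟨k1, k2⟩
  · rw [L.1]
    have k1 := congrArg (Int.cast : ℤ → AlgebraicClosure (ZMod p)) k1
    have k2 := congrArg (Int.cast : ℤ → AlgebraicClosure (ZMod p)) k2
    push_cast at k1 k2
    refine (hrY _ _ ?_ ?_).symm
    · rw [h1]; linear_combination k1 + k2 * w - ht
    · rw [h2]; linear_combination k1 - k2 - k2 * w - ht
  · rw [L.2]
    have k1 := congrArg (Int.cast : ℤ → AlgebraicClosure (ZMod p)) k1
    have k2 := congrArg (Int.cast : ℤ → AlgebraicClosure (ZMod p)) k2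
    push_cast at k1 k2
    refine (hrY _ _ ?_ ?_).symm
    · rw [h1]; linear_combination k1 + k2 * w - 3 * (1 + 2 * w) * ht
    · rw [h2]; linear_combination k1 - k2 - k2 * w + 3 * (1 + 2 * w) * ht

end Perrin

namespace Perrin

lemma pcop {p : ℕ} [Fact p.Prime] {e : ℤ} (he : IsCoprime (p : ℤ) e) {X Y : ℤ}
    (h : e * p = X ^ 2 + 23 * Y ^ 2) : IsCoprime (p : ℤ) Y := by
  have hp : Prime (p : ℤ) := Nat.prime_iff_prime_int.1 Fact.out
  rw [hp.coprime_iff_not_dvd]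
  intro hY
  have hX : (p : ℤ) ∣ X := by
    apply hp.dvd_of_dvd_pow (n := 2)
    have : X ^ 2 = e * p - 23 * Y * Y := by linarith
    rw [this]
    exact dvd_sub (dvd_mul_left _ _) (hY.mul_left _)
  obtain ⟨x, rfl⟩ := hX
  obtain ⟨y, rfl⟩ := hY
  have : e = p * (x ^ 2 + 23 * y ^ 2) := by
    apply mul_right_cancel₀ hp.ne_zero
    rw [h]; ring
  rw [hp.coprime_iff_not_dvd] at he
  exact he (this ▸ dvd_mul_right _ _)

lemma cop3 {n : ℤ} (h : ¬ (3 : ℤ) ∣ n) : IsCoprime n 3 :=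
  ((Prime.coprime_iff_not_dvd Int.prime_three).2 h).symm
lemma cop2 {n : ℤ} (h : n % 2 = 1) : IsCoprime n 2 :=
  ((Prime.coprime_iff_not_dvd Int.prime_two).2 (by omega)).symm

lemma pcop_q {p q : ℕ} [Fact p.Prime] (hq : q.Prime) (h : p ≠ q) : IsCoprime (p : ℤ) q :=
  Nat.isCoprime_iff_coprime.2 ((Nat.coprime_primes Fact.out hq).2 h)

lemma type1 {p : ℕ} [Fact p.Prime] (hp2 : p ≠ 2) (hp3 : p ≠ 3) (hp23 : p ≠ 23) {X Y : ℤ}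
    (h : (p : ℤ) = X ^ 2 + 23 * Y ^ 2) : ∃ x : ZMod p, x ^ 3 - x - 1 = 0 := by
  have hpp : p.Prime := Fact.out
  have podd : (p : ℤ) % 2 = 1 := by have := hpp.eq_two_or_odd; omega
  have c3 : IsCoprime (p : ℤ) 3 := pcop_q Nat.prime_three hp3
  have c2 : IsCoprime (p : ℤ) 2 := pcop_q Nat.prime_two hp2
  have cY : IsCoprime (p : ℤ) Y := pcop isCoprime_one_right (e := 1) (by rw [one_mul, h])
  have cYX : IsCoprime Y X := by
    have : IsCoprime Y (X ^ 2 + Y * (23 * Y)) := by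
      rw [show X ^ 2 + Y * (23 * Y) = p by rw [h]; ring]; exact cY.symm
    exact (IsCoprime.pow_right_iff two_pos).1 (IsCoprime.of_add_mul_left_right this)
  have hd : (p : ℤ) ∣ X ^ 2 + 23 * Y ^ 2 := ⟨1, by rw [← h]; ring⟩
  by_cases hX : (3 : ℤ) ∣ X
  · have hY : ¬ (3 : ℤ) ∣ Y := by
      intro hY
      have := cYX.isUnit_of_dvd' hY hX
      rw [Int.isUnit_iff] at this; omega
    have hN : (⟨25 * Y + 3 * X, 6 * X⟩ : EZ).norm = 27 * p + (2 * Y) ^ 2 := by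
      rw [EZ_norm, h]; ring
    have hodd : (27 * p + (2 * Y) ^ 2 : ℤ) % 2 = 1 := by ring_nf; omega
    obtain ⟨χ, k1, k2, k3⟩ := chi_k (th := ⟨25 * Y + 3 * X, 6 * X⟩) (n := 2 * Y) (k := p)
      ⟨2 * X, by ring⟩ (by simp; omega) ⟨25, by simp; ring⟩ (by omega) (by
        rw [hN]
        apply IsCoprime.mul_left
        · exact (cop2 hodd).symm
        · rw [show (27 * p + (2 * Y) ^ 2 : ℤ) = 3 ^ 3 * p + Y * (4 * Y) by ring]
          exact IsCoprime.add_mul_left_right (((cop3 hY).pow_right).mul_right cY.symm) _)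
      (Or.inr (by rw [hN]; exact ⟨1, by ring⟩))
    have cN : IsCoprime (p : ℤ) (⟨25 * Y + 3 * X, 6 * X⟩ : EZ).norm := by
      rw [hN, show (27 * p + (2 * Y) ^ 2 : ℤ) = (2 * Y) ^ 2 + p * 27 by ring]
      exact IsCoprime.add_mul_left_right ((c2.mul_right cY).pow_right) _
    exact (final_iff hp2 hp3 hp23 hd cY (r := 1) isCoprime_one_right (Or.inr ⟨by simp, by simp⟩)
      (k3 p hp3 cN) (k2 _ cN) cN).2 k1
  · have hN : (⟨X - 3 * Y, - 6 * Y⟩ : EZ).norm = p + (2 * Y) ^ 2 := by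
      rw [EZ_norm, h]; ring
    have hodd : (p + (2 * Y) ^ 2 : ℤ) % 2 = 1 := by ring_nf; omega
    obtain ⟨χ, k1, k2, k3⟩ := chi_k (th := ⟨X - 3 * Y, - 6 * Y⟩) (n := 2 * X) (k := p)
      ⟨- 2 * Y, by ring⟩ (by simp; omega) ⟨1, by simp; ring⟩ (by omega) (by
        rw [hN]
        apply IsCoprime.mul_left
        · exact (cop2 hodd).symm
        · rw [show (p + (2 * Y) ^ 2 : ℤ) = 3 ^ 3 * Y ^ 2 + X * X by rw [h]; ring]
          exact IsCoprime.add_mul_left_right (((cop3 hX).pow_right).mul_right cYX.symm.pow_right) _)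
      (Or.inl (by rw [hN]; exact ⟨23, by rw [h]; ring⟩))
    have cN : IsCoprime (p : ℤ) (⟨X - 3 * Y, - 6 * Y⟩ : EZ).norm := by
      rw [hN, show (p + (2 * Y) ^ 2 : ℤ) = (2 * Y) ^ 2 + p * 1 by ring]
      exact IsCoprime.add_mul_left_right ((c2.mul_right cY).pow_right) _
    exact (final_iff hp2 hp3 hp23 hd cY (r := 1) isCoprime_one_right (Or.inl ⟨by simp, by simp⟩)
      (k3 p hp3 cN) (k2 _ cN) cN).2 k1

lemma chi_two_ne {th c : EZ} (hR : Rel th c 2) (hc : c ^ 3 = 1)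
    (hcop : IsCoprime (2 : ℤ) th.norm) (him : th.im % 2 = 1) : c ≠ 1 := by
  intro hc1
  obtain ⟨f, w, hw, h1, h2⟩ := exists_hom (AlgebraicClosure (ZMod 2))
  have := (rel_iff (q := 2) (m := 1) (by norm_num) (Or.inr rfl) hR hc (by exact_mod_cast hcop) f).2 hc1
  rw [pow_one, pow_one, h1, h2] at this
  have h2 : (2 : AlgebraicClosure (ZMod 2)) = 0 := by exact_mod_cast CharP.cast_eq_zero (AlgebraicClosure (ZMod 2)) 2
  have h3 : (th.im : AlgebraicClosure (ZMod 2)) = 0 := by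
    linear_combination this - th.im * w * h2
  rw [CharP.intCast_eq_zero_iff (AlgebraicClosure (ZMod 2)) 2] at h3
  push_cast at h3
  omega

lemma type2 {p : ℕ} [Fact p.Prime] (hp2 : p ≠ 2) (hp3 : p ≠ 3) (hp23 : p ≠ 23) {X Y : ℤ}
    (h : 8 * (p : ℤ) = X ^ 2 + 23 * Y ^ 2) (oX : X % 2 = 1) (oY : Y % 2 = 1) :
    ¬ ∃ x : ZMod p, x ^ 3 - x - 1 = 0 := by
  have hpp : p.Prime := Fact.out
  have c3 : IsCoprime (p : ℤ) 3 := pcop_q Nat.prime_three hp3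
  have c2 : IsCoprime (p : ℤ) 2 := pcop_q Nat.prime_two hp2
  have c8 : IsCoprime (p : ℤ) 8 := by
    rw [show (8 : ℤ) = 2 ^ 3 by norm_num]; exact c2.pow_right
  have cY : IsCoprime (p : ℤ) Y := pcop (e := 8) c8 h
  have cYX : IsCoprime Y X := by
    have : IsCoprime Y (X ^ 2 + Y * (23 * Y)) := by
      rw [show X ^ 2 + Y * (23 * Y) = 2 ^ 3 * p by linear_combination -h]
      exact (cop2 oY).pow_right.mul_right cY.symm
    exact (IsCoprime.pow_right_iff two_pos).1 (IsCoprime.of_add_mul_left_right this)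
  have hd : (p : ℤ) ∣ X ^ 2 + 23 * Y ^ 2 := ⟨8, by rw [← h]; ring⟩
  have oYY : Y ^ 2 % 2 = 1 := by
    have := Int.odd_iff.1 ((Int.odd_iff.2 oY).pow (n := 2)); exact this
  by_cases hX : (3 : ℤ) ∣ X
  · have hY : ¬ (3 : ℤ) ∣ Y := by
      intro hY
      have := cYX.isUnit_of_dvd' hY hX
      rw [Int.isUnit_iff] at this; omega
    obtain ⟨u, hu⟩ : ∃ u : ℤ, 2 * u = 25 * Y + 3 * X := ⟨(25 * Y + 3 * X) / 2, by omega⟩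
    have hN : (⟨u, 3 * X⟩ : EZ).norm = 54 * p + Y ^ 2 := by
      rw [EZ_norm]
      have : 4 * (u ^ 2 - u * (3 * X) + (3 * X) ^ 2) = 4 * (54 * p + Y ^ 2) := by
        linear_combination (2 * u + 25 * Y + 3 * X - 6 * X) * hu - 27 * h
      simpa using this
    have hodd : (54 * p + Y ^ 2 : ℤ) % 2 = 1 := by omega
    obtain ⟨χ, k1, k2, k3⟩ := chi_k (th := ⟨u, 3 * X⟩) (n := Y) (k := 2 * p)
      ⟨X, by ring⟩ (by simp; omega) ⟨25, by simp; linear_combination hu⟩ (by omega) (by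
        rw [hN]
        rw [show (54 * p + Y ^ 2 : ℤ) = 3 ^ 3 * 2 * p + Y * Y by ring]
        exact IsCoprime.add_mul_left_right (((cop3 hY).pow_right.mul_right (cop2 oY)).mul_right cY.symm) _)
      (Or.inr (by rw [hN]; exact ⟨1, by ring⟩))
    have cN : IsCoprime (p : ℤ) (⟨u, 3 * X⟩ : EZ).norm := by
      rw [hN, show (54 * p + Y ^ 2 : ℤ) = Y ^ 2 + p * 54 by ring]
      exact IsCoprime.add_mul_left_right (cY.pow_right) _
    have cN2 : IsCoprime (2 : ℤ) (⟨u, 3 * X⟩ : EZ).norm := by rw [hN]; exact (cop2 hodd).symm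
    have n2 := chi_two_ne (k3 2 (by norm_num) cN2) (k2 _ cN2) cN2 (by simp; omega)
    rw [final_iff hp2 hp3 hp23 hd cY (r := 2) c2 (Or.inr ⟨by simp [hu], by simp; ring⟩)
      (k3 p hp3 cN) (k2 _ cN) cN]
    intro hc
    rw [map_mul, hc, mul_one] at k1
    exact n2 k1
  · obtain ⟨u, hu⟩ : ∃ u : ℤ, 2 * u = X - 3 * Y := ⟨(X - 3 * Y) / 2, by omega⟩
    have hN : (⟨u, - 3 * Y⟩ : EZ).norm = 2 * p + Y ^ 2 := by
      rw [EZ_norm]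
      have : 4 * (u ^ 2 - u * (- 3 * Y) + (- 3 * Y) ^ 2) = 4 * (2 * p + Y ^ 2) := by
        linear_combination (2 * u + X - 3 * Y + 6 * Y) * hu - h
      simpa using this
    have hodd : (2 * p + Y ^ 2 : ℤ) % 2 = 1 := by omega
    obtain ⟨χ, k1, k2, k3⟩ := chi_k (th := ⟨u, - 3 * Y⟩) (n := X) (k := 2 * p)
      ⟨- Y, by ring⟩ (by simp; omega) ⟨1, by simp; linear_combination hu⟩ (by omega) (by
        rw [hN]
        have : IsCoprime X (4 * (2 * p + Y ^ 2)) := by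
          rw [show (4 * (2 * p + Y ^ 2) : ℤ) = 3 ^ 3 * Y ^ 2 + X * X by linear_combination h]
          exact IsCoprime.add_mul_left_right (((cop3 hX).pow_right).mul_right cYX.symm.pow_right) _
        exact this.of_mul_right_right)
      (Or.inl (by rw [hN]; exact ⟨23, by linear_combination h⟩))
    have cN : IsCoprime (p : ℤ) (⟨u, - 3 * Y⟩ : EZ).norm := by
      rw [hN, show (2 * p + Y ^ 2 : ℤ) = Y ^ 2 + p * 2 by ring]
      exact IsCoprime.add_mul_left_right (cY.pow_right) _
    have cN2 : IsCoprime (2 : ℤ) (⟨u, - 3 * Y⟩ : EZ).norm := by rw [hN]; exact (cop2 hodd).symm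
    have n2 := chi_two_ne (k3 2 (by norm_num) cN2) (k2 _ cN2) cN2 (by simp; omega)
    rw [final_iff hp2 hp3 hp23 hd cY (r := 2) c2 (Or.inl ⟨by simp [hu], by simp; ring⟩)
      (k3 p hp3 cN) (k2 _ cN) cN]
    intro hc
    rw [map_mul, hc, mul_one] at k1
    exact n2 k1

end Perrin

namespace Perrin

lemma reduce (n : ℕ) : ∀ a b c : ℤ, 0 < a → 0 < c → b ^ 2 + 23 = 4 * a * c → (a + c).toNat ≤ n →
    (∀ x y : ℤ, ∃ x' y' : ℤ, a * x ^ 2 + b * x * y + c * y ^ 2 = x' ^ 2 + x' * y' + 6 * y' ^ 2) ∨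
    (∀ x y : ℤ, ∃ x' y' : ℤ, a * x ^ 2 + b * x * y + c * y ^ 2 = 2 * x' ^ 2 + x' * y' + 3 * y' ^ 2) := by
  induction n with
  | zero => intro a b c ha hc _ h; omega
  | succ n ih =>
    intro a b c ha hc hD hn
    -- a general substitution step
    by_cases h1 : a < b
    · -- x = x' - y : form (a, b - 2a, a - b + c)
      have h0 : 0 < a - b + c := by nlinarith [sq_nonneg (2 * a - b)]
      rcases ih a (b - 2 * a) (a - b + c) ha h0 (by linear_combination hD) (by omega) with H | H
      · left; intro x y
        obtain ⟨x', y', e⟩ := H (x + y) y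
        exact ⟨x', y', by rw [← e]; ring⟩
      · right; intro x y
        obtain ⟨x', y', e⟩ := H (x + y) y
        exact ⟨x', y', by rw [← e]; ring⟩
    by_cases h2 : b < -a
    · have h0 : 0 < a + b + c := by nlinarith [sq_nonneg (2 * a + b)]
      rcases ih a (b + 2 * a) (a + b + c) ha h0 (by linear_combination hD) (by omega) with H | H
      · left; intro x y
        obtain ⟨x', y', e⟩ := H (x - y) y
        exact ⟨x', y', by rw [← e]; ring⟩
      · right; intro x y
        obtain ⟨x', y', e⟩ := H (x - y) y
        exact ⟨x', y', by rw [← e]; ring⟩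
    by_cases h3 : c < b
    · have h0 : 0 < a - b + c := by nlinarith [sq_nonneg (2 * c - b)]
      rcases ih (a - b + c) (b - 2 * c) c h0 hc (by linear_combination hD) (by omega) with H | H
      · left; intro x y
        obtain ⟨x', y', e⟩ := H x (y + x)
        exact ⟨x', y', by rw [← e]; ring⟩
      · right; intro x y
        obtain ⟨x', y', e⟩ := H x (y + x)
        exact ⟨x', y', by rw [← e]; ring⟩
    by_cases h4 : b < -c
    · have h0 : 0 < a + b + c := by nlinarith [sq_nonneg (2 * c + b)]
      rcases ih (a + b + c) (b + 2 * c) c h0 hc (by linear_combination hD) (by omega) with H | H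
      · left; intro x y
        obtain ⟨x', y', e⟩ := H x (y - x)
        exact ⟨x', y', by rw [← e]; ring⟩
      · right; intro x y
        obtain ⟨x', y', e⟩ := H x (y - x)
        exact ⟨x', y', by rw [← e]; ring⟩
    push Not at h1 h2 h3 h4
    have hb : b ^ 2 ≤ a * c := by
      rcases le_total 0 b with hb | hb <;> nlinarith
    have hac : a * c ≤ 7 := by nlinarith
    have hb' : b ≤ 2 := by nlinarith
    have hb'' : -2 ≤ b := by nlinarith
    have ha7 : a ≤ 7 := by nlinarith
    have hc7 : c ≤ 7 := by nlinarith
    have : (b = 1 ∨ b = -1) ∧ ((a = 1 ∧ c = 6) ∨ (a = 2 ∧ c = 3) ∨ (a = 3 ∧ c = 2) ∨ (a = 6 ∧ c = 1)) := by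
      clear ih hn h1 h2 h3 h4 hb hac
      interval_cases b <;> interval_cases a <;> omega
    obtain ⟨rfl | rfl, ⟨rfl, rfl⟩ | ⟨rfl, rfl⟩ | ⟨rfl, rfl⟩ | ⟨rfl, rfl⟩⟩ := this
    · left; exact fun x y => ⟨x, y, by ring⟩
    · right; exact fun x y => ⟨x, y, by ring⟩
    · right; exact fun x y => ⟨y, x, by ring⟩
    · left; exact fun x y => ⟨y, x, by ring⟩
    · left; exact fun x y => ⟨x, -y, by ring⟩
    · right; exact fun x y => ⟨x, -y, by ring⟩
    · right; exact fun x y => ⟨y, -x, by ring⟩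
    · left; exact fun x y => ⟨y, -x, by ring⟩

lemma repr {p : ℕ} [Fact p.Prime] (hp2 : p ≠ 2) {d : ZMod p} (hd : d ^ 2 = -23) :
    (∃ X Y : ℤ, (p : ℤ) = X ^ 2 + 23 * Y ^ 2) ∨
    (∃ X Y : ℤ, 8 * (p : ℤ) = X ^ 2 + 23 * Y ^ 2 ∧ X % 2 = 1 ∧ Y % 2 = 1) := by
  have hpp : p.Prime := Fact.out
  have podd : (p : ℤ) % 2 = 1 := by have := hpp.eq_two_or_odd; omega
  obtain ⟨t, ht, hto⟩ : ∃ t : ℤ, (p : ℤ) ∣ t ^ 2 + 23 ∧ t % 2 = 1 := by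
    have h0 : (p : ℤ) ∣ (d.val : ℤ) ^ 2 + 23 := by
      rw [← ZMod.intCast_zmod_eq_zero_iff_dvd]
      simp [hd]
    rcases Int.emod_two_eq_zero_or_one (d.val : ℤ) with h | h
    · refine ⟨d.val + p, ?_, by omega⟩
      rw [show ((d.val : ℤ) + p) ^ 2 + 23 = (d.val ^ 2 + 23) + p * (2 * d.val + p) by ring]
      exact dvd_add h0 (dvd_mul_right _ _)
    · exact ⟨d.val, h0, h⟩
  obtain ⟨k, hk⟩ := ht
  obtain ⟨j, hj⟩ : ∃ j : ℤ, t = 2 * j + 1 := ⟨t / 2, by omega⟩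
  obtain ⟨c, hc⟩ : (4 : ℤ) ∣ k := by
    have h4 : (4 : ℤ) ∣ p * k := ⟨j ^ 2 + j + 6, by rw [← hk, hj]; ring⟩
    have : IsCoprime (4 : ℤ) p := by
      rw [show (4 : ℤ) = 2 ^ 2 by norm_num]
      exact ((Prime.coprime_iff_not_dvd Int.prime_two).2 (by omega)).pow_left
    exact this.dvd_of_dvd_mul_left h4
  have hp0 : (0 : ℤ) < p := by exact_mod_cast hpp.pos
  have hD : t ^ 2 + 23 = 4 * p * c := by rw [hk, hc]; ring
  have hc0 : 0 < c := by nlinarith [sq_nonneg t]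
  rcases reduce _ p t c hp0 hc0 hD le_rfl with H | H
  · obtain ⟨x, y, e⟩ := H 1 0
    have e : (p : ℤ) = x ^ 2 + x * y + 6 * y ^ 2 := by linarith
    left
    have hy : y % 2 = 0 := by
      by_contra hy
      obtain ⟨v, rfl⟩ : ∃ v, y = 2 * v + 1 := ⟨y / 2, by omega⟩
      rcases Int.even_or_odd' x with ⟨u, rfl | rfl⟩ <;> ring_nf at e <;> omega
    obtain ⟨v, rfl⟩ : ∃ v, y = 2 * v := ⟨y / 2, by omega⟩
    exact ⟨x + v, v, by rw [e]; ring⟩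
  · obtain ⟨x, y, e⟩ := H 1 0
    have e : (p : ℤ) = 2 * x ^ 2 + x * y + 3 * y ^ 2 := by linarith
    right
    have hy : y % 2 = 1 := by
      by_contra hy
      obtain ⟨v, rfl⟩ : ∃ v, y = 2 * v := ⟨y / 2, by omega⟩
      ring_nf at e; omega
    exact ⟨4 * x + y, y, by rw [e]; ring, by omega, hy⟩

end Perrin

namespace Perrin

lemma roots_of {F : Type*} [Field F] [IsAlgClosed F] {α : F} (hα : α ^ 3 - α - 1 = 0) :
    ∃ β γ : F, α + β + γ = 0 ∧ α * β + β * γ + γ * α = -1 ∧ α * β * γ = 1 := by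
  obtain ⟨β, hβ⟩ := IsAlgClosed.exists_root
      (Polynomial.X ^ 2 + Polynomial.C α * Polynomial.X + Polynomial.C (α ^ 2 - 1) : Polynomial F) (by
      have : (Polynomial.X ^ 2 + Polynomial.C α * Polynomial.X + Polynomial.C (α ^ 2 - 1) : Polynomial F).degree = 2 := by
        compute_degree!
      rw [this]; norm_num)
  have hβ : β ^ 2 + α * β + (α ^ 2 - 1) = 0 := by simpa [Polynomial.IsRoot] using hβ
  refine ⟨β, -α - β, by ring, by linear_combination -hβ, by linear_combination -α * hβ + hα⟩

lemma newton {F : Type*} [Field F] {P : ℕ → ℤ}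
    (h0 : P 0 = 3) (h1 : P 1 = 0) (h2 : P 2 = 2) (hrec : ∀ n, P (n + 3) = P (n + 1) + P n)
    {α β γ : F} (e1 : α + β + γ = 0) (e2 : α * β + β * γ + γ * α = -1)
    (ha : α ^ 3 - α - 1 = 0) (hb : β ^ 3 - β - 1 = 0) (hc : γ ^ 3 - γ - 1 = 0) (n : ℕ) :
    (P n : F) = α ^ n + β ^ n + γ ^ n ∧ (P (n + 1) : F) = α ^ (n + 1) + β ^ (n + 1) + γ ^ (n + 1) ∧
    (P (n + 2) : F) = α ^ (n + 2) + β ^ (n + 2) + γ ^ (n + 2) := by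
  induction n with
  | zero =>
    rw [h0, zero_add, zero_add, h1, h2]
    refine ⟨by norm_num, by push_cast; linear_combination -e1, by push_cast; linear_combination -(α + β + γ) * e1 + 2 * e2⟩
  | succ n ih =>
    refine ⟨ih.2.1, ih.2.2, ?_⟩
    rw [show n + 1 + 2 = n + 3 by ring, hrec]
    push_cast
    rw [ih.1, ih.2.1]
    linear_combination -α ^ n * ha - β ^ n * hb - γ ^ n * hc

lemma disc {F : Type*} [Field F] {α β γ : F} (e1 : α + β + γ = 0) (e2 : α * β + β * γ + γ * α = -1)
    (e3 : α * β * γ = 1) : ((β - γ) * (3 * α ^ 2 - 1)) ^ 2 = -23 := by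
  have h1 : (β - γ) ^ 2 = 4 - 3 * α ^ 2 := by
    linear_combination (3 * α + β + γ) * e1 - 4 * e2
  have ha : α ^ 3 - α - 1 = 0 := by linear_combination α ^ 2 * e1 - α * e2 + e3
  rw [mul_pow, h1]
  linear_combination (-27) * (α ^ 3 - α + 1) * ha

lemma is_root {F : Type*} [Field F] {α β γ : F} (e1 : α + β + γ = 0) (e2 : α * β + β * γ + γ * α = -1)
    (e3 : α * β * γ = 1) (y : F) : y ^ 3 - y - 1 = (y - α) * ((y - β) * (y - γ)) := by
  linear_combination y ^ 2 * e1 - y * e2 + e3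

lemma root_perm {p : ℕ} [Fact p.Prime] {F : Type*} [Field F] [CharP F p] {α β γ y : F}
    (e1 : α + β + γ = 0) (e2 : α * β + β * γ + γ * α = -1)
    (e3 : α * β * γ = 1) (hy : y ^ 3 - y - 1 = 0) : y ^ p = α ∨ y ^ p = β ∨ y ^ p = γ := by
  have : (y ^ p) ^ 3 - y ^ p - 1 = 0 := by
    have h := congrArg (· ^ p) hy
    simp only [sub_pow_char, one_pow, zero_pow (Fact.out : p.Prime).ne_zero] at h
    rw [← h]; ring
  rw [is_root e1 e2 e3] at this
  rcases mul_eq_zero.1 this with h | h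
  · exact Or.inl (sub_eq_zero.1 h)
  rcases mul_eq_zero.1 h with h | h
  · exact Or.inr (Or.inl (sub_eq_zero.1 h))
  · exact Or.inr (Or.inr (sub_eq_zero.1 h))

lemma transp {F : Type*} [Field F] (n3 : (3 : F) ≠ 0) (n23 : (23 : F) ≠ 0) {α β γ : F} (e1 : α + β + γ = 0) (e2 : α * β + β * γ + γ * α = -1)
    (e3 : α * β * γ = 1) (h : α * α + 2 * (β * γ) = 2) : False := by
  have h1 : β * γ = α ^ 2 - 1 := by linear_combination e2 - α * e1
  have h2 : 3 * α ^ 2 = 4 := by linear_combination h - 2 * h1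
  have h3 : α = 3 := by linear_combination 3 * e3 - 3 * α * h1 - α * h2
  rw [h3] at h2
  apply n23; linear_combination h2

lemma one_iff_three {P : ℕ → ℤ}
    (h0 : P 0 = 3) (h1 : P 1 = 0) (h2 : P 2 = 2) (hrec : ∀ n, P (n + 3) = P (n + 1) + P n)
    {p : ℕ} [Fact p.Prime] (hp2 : p ≠ 2) (hp3 : p ≠ 3) (hp23 : p ≠ 23) :
    Int.ModEq (p : ℤ) (P (p + 1)) 2 ↔ (∃ d : ZMod p, d ^ 2 = -23) ∧ ∃ x : ZMod p, x ^ 3 - x - 1 = 0 := by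
  have hpp : p.Prime := Fact.out
  obtain ⟨F, _, _, _, _⟩ : ∃ (F : Type) (_ : Field F) (_ : CharP F p) (_ : Algebra (ZMod p) F), IsAlgClosed F :=
    ⟨AlgebraicClosure (ZMod p), inferInstance, inferInstance, inferInstance, inferInstance⟩
  have cne : ∀ q : ℕ, q.Prime → p ≠ q → (q : F) ≠ 0 := by
    intro q hq hne h
    rw [CharP.cast_eq_zero_iff F p] at h
    exact hne ((Nat.prime_dvd_prime_iff_eq hpp hq).1 h)
  have n2 : (2 : F) ≠ 0 := by simpa using cne 2 Nat.prime_two hp2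
  have n3 : (3 : F) ≠ 0 := by simpa using cne 3 Nat.prime_three hp3
  have n23 : (23 : F) ≠ 0 := by simpa using cne 23 (by norm_num) hp23
  have natp : ∀ k : ℕ, (k : F) ^ p = k := fun k => by
    rw [← map_natCast (algebraMap (ZMod p) F), ← map_pow, ZMod.pow_card]
  have p3 : (3 : F) ^ p = 3 := by exact_mod_cast natp 3
  have p2 : (2 : F) ^ p = 2 := by exact_mod_cast natp 2
  have hmod : Int.ModEq (p : ℤ) (P (p + 1)) 2 ↔ (P (p + 1) : F) = 2 := by
    rw [← CharP.intCast_eq_intCast F p]; simp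
  have inj : ∀ x y : F, x ^ p = y ^ p → x = y := fun x y h => by
    have : (x - y) ^ p = 0 := by rw [sub_pow_char, h, sub_self]
    exact sub_eq_zero.1 (pow_eq_zero_iff hpp.ne_zero |>.1 this)
  have hD3 : ∀ α : F, (α ^ 2 * 3) = 3 * α ^ 2 := fun α => mul_comm _ _
  rw [hmod]
  constructor
  · intro h
    obtain ⟨α, hα⟩ : ∃ α : F, α ^ 3 - α - 1 = 0 := by
      obtain ⟨α, h⟩ := IsAlgClosed.exists_root (Polynomial.X ^ 3 - Polynomial.X - 1 : Polynomial F) (by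
        have : (Polynomial.X ^ 3 - Polynomial.X - 1 : Polynomial F).degree = 3 := by compute_degree!
        rw [this]; norm_num)
      exact ⟨α, by simpa [Polynomial.IsRoot] using h⟩
    obtain ⟨β, γ, e1, e2, e3⟩ := roots_of hα
    have hβ : β ^ 3 - β - 1 = 0 := by rw [is_root e1 e2 e3]; ring
    have hγ : γ ^ 3 - γ - 1 = 0 := by rw [is_root e1 e2 e3]; ring
    have hN := (newton h0 h1 h2 hrec e1 e2 hα hβ hγ p).2.1
    rw [h, pow_succ, pow_succ, pow_succ] at hN
    have hdisc := disc e1 e2 e3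
    have e1' : β + γ + α = 0 := by linear_combination e1
    have e2' : β * γ + γ * α + α * β = -1 := by linear_combination e2
    have e3' : β * γ * α = 1 := by linear_combination e3
    have e1'' : γ + α + β = 0 := by linear_combination e1
    have e2'' : γ * α + α * β + β * γ = -1 := by linear_combination e2
    have e3'' : γ * α * β = 1 := by linear_combination e3
    have ne1 : β ≠ γ := by rintro rfl; apply n23; linear_combination hdisc
    have ne2 : γ ≠ α := by rintro rfl; apply n23; linear_combination (disc e1' e2' e3')
    have ne3 : α ≠ β := by rintro rfl; apply n23; linear_combination (disc e1'' e2'' e3'')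
    have m1 : α ^ p ≠ β ^ p := fun h => ne3 (inj _ _ h)
    have m2 : β ^ p ≠ γ ^ p := fun h => ne1 (inj _ _ h)
    have m3 : γ ^ p ≠ α ^ p := fun h => ne2 (inj _ _ h)
    have key : α ^ p = α ∧ β ^ p = β ∧ γ ^ p = γ := by
      have rα := root_perm (p := p) e1 e2 e3 hα
      have rβ := root_perm (p := p) e1 e2 e3 hβ
      have rγ := root_perm (p := p) e1 e2 e3 hγ
      generalize α ^ p = a at *
      generalize β ^ p = b at *
      generalize γ ^ p = c at *
      rcases rα with rfl | rfl | rfl <;> rcases rβ with rfl | rfl | rfl <;> rcases rγ with rfl | rfl | rfl <;>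
        first
        | exact ⟨rfl, rfl, rfl⟩
        | exact absurd rfl m1
        | exact absurd rfl m2
        | exact absurd rfl m3
        | (exfalso; exact transp n3 n23 e1 e2 e3 (by linear_combination -hN))
        | (exfalso; exact transp n3 n23 e1' e2' e3' (by linear_combination -hN))
        | (exfalso; exact transp n3 n23 e1'' e2'' e3'' (by linear_combination -hN))
        | (exfalso; apply n3; linear_combination hN + e2)
    obtain ⟨k1, k2, k3⟩ := key
    constructor
    · obtain ⟨d, hd⟩ := mem_prime_field (p := p) (x := (β - γ) * (3 * α ^ 2 - 1)) (by
        rw [mul_pow, sub_pow_char, sub_pow_char, mul_pow, p3, one_pow, k2, k3, ← pow_mul, mul_comm 2 p, pow_mul, k1])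
      refine ⟨d, (algebraMap (ZMod p) F).injective ?_⟩
      rw [map_pow, hd, hdisc, map_neg]; exact congrArg _ (map_ofNat _ 23).symm
    · obtain ⟨x, hx⟩ := mem_prime_field (p := p) k1
      refine ⟨x, (algebraMap (ZMod p) F).injective ?_⟩
      simp [hx, hα]
  · rintro ⟨⟨d, hd⟩, x, hx⟩
    obtain ⟨α, hαx⟩ : ∃ α : F, α = algebraMap (ZMod p) F x := ⟨_, rfl⟩
    obtain ⟨δ, hδ⟩ : ∃ δ : F, δ = algebraMap (ZMod p) F d := ⟨_, rfl⟩
    have k1 : α ^ p = α := by rw [hαx, ← map_pow, ZMod.pow_card]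
    have kd : δ ^ p = δ := by rw [hδ, ← map_pow, ZMod.pow_card]
    have hδ2 : δ ^ 2 = -23 := by rw [hδ, ← map_pow, hd, map_neg]; exact congrArg _ (map_ofNat _ 23)
    have hα : α ^ 3 - α - 1 = 0 := by
      have := congrArg (algebraMap (ZMod p) F) hx
      simpa [← hαx] using this
    obtain ⟨β, γ, e1, e2, e3⟩ := roots_of hα
    have hβ : β ^ 3 - β - 1 = 0 := by rw [is_root e1 e2 e3]; ring
    have hγ : γ ^ 3 - γ - 1 = 0 := by rw [is_root e1 e2 e3]; ring
    have hN := (newton h0 h1 h2 hrec e1 e2 hα hβ hγ p).2.1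
    have hdisc := disc e1 e2 e3
    have hne : 3 * α ^ 2 - 1 ≠ 0 := by
      intro h; rw [h] at hdisc; apply n23; linear_combination hdisc
    have q1 : (3 * α ^ 2 - 1) ^ p = 3 * α ^ 2 - 1 := by
      rw [sub_pow_char, mul_pow, p3, one_pow, ← pow_mul, mul_comm 2 p, pow_mul, k1]
    have q2 : ((β - γ) * (3 * α ^ 2 - 1)) ^ p = (β - γ) * (3 * α ^ 2 - 1) := by
      rcases sq_eq_sq_iff_eq_or_eq_neg.1 (hdisc.trans hδ2.symm) with h | h
      · rw [h, kd]
      · have podd : Odd p := hpp.odd_of_ne_two hp2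
        rw [h, podd.neg_pow, kd]
    rw [mul_pow, q1] at q2
    have q3 := mul_right_cancel₀ hne q2
    rw [sub_pow_char] at q3
    have q4 : α ^ p + β ^ p + γ ^ p = 0 := by
      rw [← add_pow_char, ← add_pow_char, e1, zero_pow hpp.ne_zero]
    have k2 : β ^ p = β := by
      apply mul_left_cancel₀ n2; linear_combination q3 + q4 - e1 - k1
    have k3 : γ ^ p = γ := by
      apply mul_left_cancel₀ n2; linear_combination -q3 + q4 - e1 - k1
    rw [hN, pow_succ, pow_succ, pow_succ, k1, k2, k3]
    linear_combination (α + β + γ) * e1 - 2 * e2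

end Perrin

theorem perrin_splitting (P : ℕ → ℤ)
    (h0 : P 0 = 3) (h1 : P 1 = 0) (h2 : P 2 = 2)
    (hrec : ∀ n, P (n + 3) = P (n + 1) + P n)
    (p : ℕ) [Fact p.Prime] (hpe : ¬ (p ∣ 2 * 3 * 23)) :
    (Int.ModEq (p : ℤ) (P (p + 1)) 2 ↔ ∃ X Y : ℤ, (p : ℤ) = X ^ 2 + 23 * Y ^ 2) ∧
    (Int.ModEq (p : ℤ) (P (p + 1)) 2 ↔
      legendreSym p (-23) = 1 ∧ ∃ x : ZMod p, x ^ 3 - x - 1 = 0) := by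
  have hpp : p.Prime := Fact.out
  have hp2 : p ≠ 2 := by rintro rfl; exact hpe (by norm_num)
  have hp3 : p ≠ 3 := by rintro rfl; exact hpe (by norm_num)
  have hp23 : p ≠ 23 := by rintro rfl; exact hpe (by norm_num)
  have H := Perrin.one_iff_three h0 h1 h2 hrec hp2 hp3 hp23
  constructor
  · rw [H]
    constructor
    · rintro ⟨⟨d, hd⟩, hx⟩
      rcases Perrin.repr hp2 hd with h | ⟨X, Y, h, oX, oY⟩
      · exact h
      · exact absurd hx (Perrin.type2 hp2 hp3 hp23 h oX oY)
    · rintro ⟨X, Y, h⟩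
      refine ⟨?_, Perrin.type1 hp2 hp3 hp23 h⟩
      have cY : IsCoprime (p : ℤ) Y := Perrin.pcop isCoprime_one_right (e := 1) (by rw [one_mul, h])
      have hY : (Y : ZMod p) ≠ 0 := Perrin.cop_ne cY
      have e : (X ^ 2 + 23 * Y ^ 2 : ZMod p) = 0 := by
        have := congrArg (Int.cast : ℤ → ZMod p) h
        push_cast at this
        rw [← this]; simp
      refine ⟨X / Y, ?_⟩
      rw [div_pow, div_eq_iff (pow_ne_zero 2 hY)]
      linear_combination e
  · rw [H]
    have n23 : ((-23 : ℤ) : ZMod p) ≠ 0 := Perrin.cop_ne (by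
      have := Perrin.pcop_q (p := p) (q := 23) (by norm_num) hp23
      exact (IsCoprime.neg_right this))
    rw [legendreSym.eq_one_iff p n23]
    refine and_congr_left fun _ => ?_
    push_cast
    constructor
    · rintro ⟨d, hd⟩; exact ⟨d, by rw [← hd, sq]⟩
    · rintro ⟨d, hd⟩; exact ⟨d, by rw [sq, ← hd]⟩
end

section
/- Let (B_n) be the Berstel sequence defined by B_0 = B_1 = 0, B_2 = 1, and B_{n+3} = 2B_{n+2} - 4B_{n+1} + 4B_n for n ≥ 0. Then for any prime p not dividing 2·3·11·13, p divides B_p if and only if there exist integers X, Y with p = X^2 + 11Y^2. -/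
abbrev Eis := QuadraticAlgebra ℤ (-1) (-1)

namespace Eis

theorem norm_eq (z : Eis) : z.norm = z.re ^ 2 - z.re * z.im + z.im ^ 2 := by
  rw [QuadraticAlgebra.norm_def]; ring

theorem norm_nonneg (z : Eis) : 0 ≤ z.norm := by
  rw [norm_eq]; nlinarith [sq_nonneg (2 * z.re - z.im), sq_nonneg z.im]

theorem norm_eq_zero {z : Eis} (h : z.norm = 0) : z = 0 := by
  rw [norm_eq] at h
  have h1 : z.im = 0 := by nlinarith [sq_nonneg (2 * z.re - z.im), sq_nonneg z.im]
  have h2 : z.re = 0 := by rw [h1] at h; nlinarith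
  ext <;> simp [h1, h2]

instance : NoZeroDivisors Eis where
  eq_zero_or_eq_zero_of_mul_eq_zero {a b} h := by
    have := congrArg (QuadraticAlgebra.norm) h
    rw [map_mul, QuadraticAlgebra.norm_zero] at this
    rcases mul_eq_zero.1 this with h | h
    · exact Or.inl (norm_eq_zero h)
    · exact Or.inr (norm_eq_zero h)

instance : Nontrivial Eis := ⟨0, 1, fun h => zero_ne_one (congrArg QuadraticAlgebra.re h : (0:ℤ) = 1)⟩

instance : IsDomain Eis := NoZeroDivisors.to_isDomain _

instance : CharZero Eis := ⟨fun a b h => by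
  simpa using congrArg QuadraticAlgebra.re h⟩

/-- the cube root of unity -/
def w : Eis := ⟨0, 1⟩

theorem w_sq : w ^ 2 + w + 1 = 0 := by
  rw [pow_two]; ext <;> rfl

theorem w_prim : IsPrimitiveRoot w 3 := by
  rw [← Polynomial.isRoot_cyclotomic_iff, Polynomial.cyclotomic_three]
  simpa using w_sq

def T (C : Eis) : Eis := C ^ 2 * star C

theorem T_mul (C D : Eis) : T (C * D) = T C * T D := by
  simp [T]; ring

def Good (C : Eis) : Prop := ∃ φ : ℕ →* Eis,
  (∀ m, m.Coprime C.norm.natAbs → φ m ^ 3 = 1) ∧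
  (∀ m m', m ≡ m' [MOD C.norm.natAbs] → φ m = φ m') ∧
  ∀ q : ℕ, ∀ _ : Fact q.Prime, q ≠ 3 → q.Coprime C.norm.natAbs →
    ∀ h : Eis →+* AlgebraicClosure (ZMod q), h (T C) ^ ((q ^ 2 - 1) / 3) = h (φ q)

theorem Good.mul {C D : Eis} (hC : Good C) (hD : Good D) : Good (C * D) := by
  obtain ⟨f, f1, f2, f3⟩ := hC
  obtain ⟨g, g1, g2, g3⟩ := hD
  refine ⟨f * g, ?_, ?_, ?_⟩
  · intro m hm
    rw [map_mul, Int.natAbs_mul, Nat.coprime_mul_iff_right] at hm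
    rw [MonoidHom.mul_apply, mul_pow, f1 m hm.1, g1 m hm.2, one_mul]
  · intro m m' h
    rw [map_mul, Int.natAbs_mul] at h
    rw [MonoidHom.mul_apply, MonoidHom.mul_apply, f2 m m' (h.of_mul_right _),
      g2 m m' (h.of_mul_left _)]
  · intro q hq h3 hm h
    rw [map_mul, Int.natAbs_mul, Nat.coprime_mul_iff_right] at hm
    rw [T_mul, map_mul, mul_pow, f3 q hq h3 hm.1, g3 q hq h3 hm.2, MonoidHom.mul_apply, map_mul]

theorem Good.star {C : Eis} (hC : Good C) : Good (star C) := by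
  obtain ⟨f, f1, f2, f3⟩ := hC
  refine ⟨(starRingEnd Eis).toMonoidHom.comp f, ?_, ?_, ?_⟩
  · intro m hm
    rw [QuadraticAlgebra.norm_star] at hm
    change (starRingEnd Eis (f m)) ^ 3 = 1
    rw [← map_pow, f1 m hm, map_one]
  · intro m m' h
    rw [QuadraticAlgebra.norm_star] at h
    change (starRingEnd Eis (f m)) = (starRingEnd Eis (f m'))
    rw [f2 m m' h]
  · intro q hq h3 hm h
    rw [QuadraticAlgebra.norm_star] at hm
    have := f3 q hq h3 hm (h.comp (starRingEnd Eis))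
    change _ = h (starRingEnd Eis (f q))
    rw [← RingHom.comp_apply, ← this]
    simp [T, starRingEnd_apply]

theorem three_dvd {q : ℕ} (hq : q.Prime) (h3 : q ≠ 3) : 3 ∣ q ^ 2 - 1 := by
  have : ¬ 3 ∣ q := fun h => h3 ((Nat.prime_dvd_prime_iff_eq Nat.prime_three hq).1 h).symm
  have h1 : q % 3 = 1 ∨ q % 3 = 2 := by omega
  have : q ^ 2 % 3 = 1 := by
    rcases h1 with h | h <;> simp [Nat.pow_mod, h]
  omega

theorem int_pow {q : ℕ} [hq : Fact q.Prime] {F : Type*} [Field F] [CharP F q] (m : ℤ)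
    (h : (m : F) ≠ 0) : (m : F) ^ (q ^ 2 - 1) = 1 := by
  have h1 : (m : F) ^ q = m := by
    have : ((m : ZMod q) : ZMod q) ^ q = m := ZMod.pow_card _
    have h2 := congrArg (ZMod.castHom (dvd_refl q) F) this
    rwa [map_pow, map_intCast] at h2
  have h2 : (m : F) ^ (q ^ 2) = m := by rw [pow_two, pow_mul, h1, h1]
  have h3 : (m : F) ^ (q ^ 2 - 1) * m = m := by
    rw [← pow_succ, Nat.sub_add_cancel (Nat.one_le_pow _ _ hq.out.pos), h2]
  exact mul_right_cancel₀ h (by rw [h3, one_mul])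

theorem cube_pow {q : ℕ} [hq : Fact q.Prime] (h3 : q ≠ 3) {F : Type*} [Field F] [CharP F q] (m : ℤ)
    (h : (m : F) ≠ 0) : ((m : F) ^ 3) ^ ((q ^ 2 - 1) / 3) = 1 := by
  rw [← pow_mul, Nat.mul_div_cancel' (three_dvd hq.out h3), int_pow m h]

theorem good_int (m : ℤ) : Good (m : Eis) := by
  refine ⟨1, by simp, by simp, ?_⟩
  intro q hq h3 hm h
  rw [MonoidHom.one_apply, map_one]
  have : h (T m) = (m : AlgebraicClosure (ZMod q)) ^ 3 := by
    simp [T]; ring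
  rw [this]
  have : CharP (AlgebraicClosure (ZMod q)) q := charP_of_injective_algebraMap
      (algebraMap (ZMod q) (AlgebraicClosure (ZMod q))).injective q
  apply cube_pow h3
  intro h0
  rw [CharP.intCast_eq_zero_iff _ q] at h0
  rw [QuadraticAlgebra.norm_intCast, Int.natAbs_pow] at hm
  have := Nat.Coprime.coprime_dvd_right (dvd_pow_self _ two_ne_zero) hm
  exact hq.out.one_lt.ne' (Nat.Coprime.eq_one_of_dvd this (Int.natCast_dvd.1 h0))

end Eis

namespace Eis
open scoped QuadraticAlgebra

theorem cube_cases {x : Eis} (h : x ^ 3 = 1) : x = 1 ∨ x = w ∨ x = w ^ 2 := by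
  obtain ⟨i, hi, rfl⟩ := w_prim.eq_pow_of_pow_eq_one h
  interval_cases i <;> simp

theorem hw_ne {F : Type*} [Field F] (h3 : (3 : F) ≠ 0) (h : Eis →+* F) : h w ≠ 1 := by
  intro h1
  have := congrArg h w_sq
  simp [h1] at this
  apply h3; linear_combination this

theorem hom_inj {F : Type*} [Field F] (h3 : (3 : F) ≠ 0) (h : Eis →+* F) {x : Eis}
    (hx : x ^ 3 = 1) (h1 : h x = 1) : x = 1 := by
  rcases cube_cases hx with rfl | rfl | rfl
  · rfl
  · exact absurd h1 (hw_ne h3 h)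
  · exfalso
    apply hw_ne h3 h
    have : h (w ^ 3) = 1 := by rw [hx_aux, map_one]
    rw [pow_succ, map_mul, h1, one_mul] at this
    exact this
where hx_aux : w ^ 3 = 1 := w_prim.pow_eq_one

theorem cube_norm {x : Eis} (h : x ^ 3 = 1) : x * star x = 1 := by
  have h1 := congrArg QuadraticAlgebra.norm h
  rw [map_pow, map_one] at h1
  have h2 : x.norm = 1 := by
    have := norm_nonneg x
    nlinarith [sq_nonneg (x.norm + 1), sq_nonneg (x.norm - 1)]
  rw [← QuadraticAlgebra.algebraMap_norm_eq_mul_star, h2, map_one]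

theorem gauss_q2 {l q : ℕ} [Fact l.Prime] [hq : Fact q.Prime] (h3 : q ≠ 3) (hlq : q ≠ l)
    {F : Type*} [Field F] [CharP F q] (χ : MulChar (ZMod l) F) (hχ : χ ^ 3 = 1)
    (ψ : AddChar (ZMod l) F) :
    gaussSum χ ψ ^ (q ^ 2) = χ (q : ZMod l) * gaussSum χ ψ := by
  have hu : (q : ZMod l) ≠ 0 := by
    intro h
    rw [ZMod.natCast_eq_zero_iff] at h
    exact hlq ((Nat.prime_dvd_prime_iff_eq (Fact.out) hq.out).1 h).symm
  have e1 : gaussSum χ ψ ^ (q ^ 2) = gaussSum (χ ^ (q ^ 2)) (ψ ^ (q ^ 2)) := by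
    rw [pow_two, pow_mul, gaussSum_frob, gaussSum_frob, ← pow_mul, ← pow_mul]
  have e2 : χ ^ (q ^ 2) = χ := by
    obtain ⟨k, hk⟩ := three_dvd hq.out h3
    have : q ^ 2 = 3 * k + 1 := by
      have := Nat.one_le_pow 2 q hq.out.pos
      omega
    rw [this, pow_succ, pow_mul, hχ, one_pow, one_mul]
  rw [e1, e2, AddChar.pow_mulShift]
  have e3 := gaussSum_mulShift χ ψ (Units.mk0 _ hu ^ 2)
  have e4 : χ (q : ZMod l) ^ 3 = 1 := by
    rw [← MulChar.pow_apply' _ (by norm_num), hχ, MulChar.one_apply hu.isUnit]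
  simp only [Units.val_pow_eq_pow_val, Units.val_mk0, map_pow] at e3
  push_cast
  rw [← e3]
  linear_combination (- gaussSum χ (ψ.mulShift ((q : ZMod l) ^ 2))) * e4

theorem exists_J (l : ℕ) [hl : Fact l.Prime] (hl3 : l % 3 = 1) :
    ∃ J : Eis, J.norm = l ∧ 3 ∣ J.im ∧ ¬ 3 ∣ J.re ∧ Good J := by
  have hdvd : 3 ∣ Fintype.card (ZMod l) - 1 := by rw [ZMod.card]; omega
  obtain ⟨χ, hχ⟩ := MulChar.exists_mulChar_orderOf (ZMod l) hdvd w_prim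
  have hχ3 : χ ^ 3 = 1 := hχ ▸ pow_orderOf_eq_one χ
  have hχ1 : χ ≠ 1 := by rintro rfl; simp at hχ
  have hχ2 : χ * χ ≠ 1 := by
    intro h
    apply hχ1
    rw [← hχ3, pow_succ, pow_two, h, one_mul]
  have hval : ∀ x : ZMod l, x ≠ 0 → χ x ^ 3 = 1 := by
    intro x hx
    rw [← MulChar.pow_apply' _ (by norm_num), hχ3, MulChar.one_apply hx.isUnit]
  have hstar : χ.ringHomComp (starRingEnd Eis) = χ⁻¹ := by
    apply eq_inv_of_mul_eq_one_right
    refine MulChar.ext fun u => ?_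
    rw [MulChar.mul_apply, MulChar.ringHomComp_apply, MulChar.one_apply_coe, starRingEnd_apply]
    exact cube_norm (hval _ u.ne_zero)
  set J := jacobiSum χ χ with hJ
  have hJs : star J = jacobiSum χ⁻¹ χ⁻¹ := by
    rw [← hstar, jacobiSum_ringHomComp, starRingEnd_apply]
  have hJJ : J * star J = l := by
    let K := FractionRing Eis
    have hinj : Function.Injective (algebraMap Eis K) := IsFractionRing.injective _ _
    have : CharZero K := charZero_of_injective_algebraMap hinj
    have hc : ringChar K ≠ ringChar (ZMod l) := by
      rw [ringChar.eq_zero, ZMod.ringChar_zmod_n]; exact hl.out.ne_zero.symm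
    have h1 := (MulChar.ringHomComp_ne_one_iff hinj).2 hχ1
    have h2 := (MulChar.ringHomComp_ne_one_iff hinj).2 hχ2
    rw [MulChar.ringHomComp_mul] at h2
    have := jacobiSum_mul_jacobiSum_inv hc h1 h1 h2
    rw [MulChar.ringHomComp_inv, jacobiSum_ringHomComp, jacobiSum_ringHomComp, ← map_mul,
      ← hJs, ZMod.card] at this
    apply hinj
    rw [this, map_natCast]
  have hnorm : J.norm = l := by
    have := QuadraticAlgebra.algebraMap_norm_eq_mul_star J
    rw [hJJ] at this
    simpa using congrArg QuadraticAlgebra.re this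
  obtain ⟨z, -, hz⟩ := exists_jacobiSum_eq_neg_one_add (n := 3) (by norm_num) hχ3 hχ3 hdvd w_prim
  have hw2 : (w - 1) ^ 2 = -3 * w := by linear_combination w_sq
  rw [← hJ, hw2] at hz
  have hz' : J = -1 + ((3 : ℤ) : Eis) * (-(z * w)) := by rw [hz]; push_cast; ring
  refine ⟨J, hnorm, ?_, ?_, ?_⟩
  · rw [hz']; simp
  · rw [hz']; simp; omega
  refine ⟨χ.toMonoidHom.comp (Nat.castRingHom (ZMod l)).toMonoidHom, ?_, ?_, ?_⟩
  · intro m hm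
    rw [hnorm, Int.natAbs_natCast] at hm
    apply hval
    change (m : ZMod l) ≠ 0
    intro h0
    rw [ZMod.natCast_eq_zero_iff] at h0
    exact hl.out.one_lt.ne' (Nat.Coprime.eq_one_of_dvd hm.symm h0)
  · intro m m' h
    rw [hnorm, Int.natAbs_natCast] at h
    change χ (m : ZMod l) = χ (m' : ZMod l)
    rw [(ZMod.natCast_eq_natCast_iff _ _ _).2 h]
  · intro q hq h3 hm h
    rw [hnorm, Int.natAbs_natCast] at hm
    have hql : q ≠ l := fun h => hl.out.one_lt.ne' (by simpa [h] using hm)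
    change _ = h (χ (q : ZMod l))
    set F := AlgebraicClosure (ZMod q)
    have : CharP F q := charP_of_injective_algebraMap (algebraMap (ZMod q) F).injective q
    have hne : ∀ r : ℕ, r.Prime → q ≠ r → (r : F) ≠ 0 := by
      intro r hr hqr h0
      rw [CharP.cast_eq_zero_iff F q] at h0
      exact hqr ((Nat.prime_dvd_prime_iff_eq hq.out hr).1 h0)
    have h3F : (3 : F) ≠ 0 := by exact_mod_cast hne 3 Nat.prime_three h3
    have hlF := hne l hl.out hql
    have : NeZero (l : F) := ⟨hlF⟩
    obtain ⟨ζ, hζ⟩ := HasEnoughRootsOfUnity.exists_primitiveRoot F l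
    have hψ := AddChar.zmodChar_primitive_of_primitive_root l hζ
    set ψ := AddChar.zmodChar l ((IsPrimitiveRoot.iff_def ζ l).mp hζ).left
    set χ' := χ.ringHomComp h
    have hχ'3 : χ' ^ 3 = 1 := by
      rw [MulChar.ringHomComp_pow, hχ3, MulChar.ringHomComp_one]
    have hχ'1 : χ' ≠ 1 := by
      intro h1
      apply hχ1
      refine MulChar.ext fun u => ?_
      rw [MulChar.one_apply_coe]
      apply hom_inj h3F h (hval _ u.ne_zero)
      have := congrArg (fun f => f (u : ZMod l)) h1
      simpa [χ'] using this
    have ho : orderOf χ' = 3 := orderOf_eq_prime hχ'3 hχ'1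
    have hg := gaussSum_pow_eq_prod_jacobiSum (χ := χ') (ψ := ψ) (by rw [ho]; norm_num) hψ
    have hm1 : χ' (-1) = 1 := by
      have h1 : χ' (-1) ^ 3 = 1 := by
        rw [← MulChar.pow_apply' _ (by norm_num), hχ'3, MulChar.one_apply isUnit_one.neg]
      have h2 : χ' (-1) ^ 2 = 1 := by rw [← map_pow]; simp
      rw [pow_succ, h2, one_mul] at h1
      exact h1
    rw [ho, hm1] at hg
    simp only [Nat.reduceSub, Nat.Ico_succ_singleton, Finset.prod_singleton,
      pow_one, ZMod.card, one_mul] at hg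
    rw [jacobiSum_ringHomComp, ← hJ] at hg
    have hT : h (T J) = gaussSum χ' ψ ^ 3 := by
      rw [hg, T]
      have := congrArg h hJJ
      simp only [map_mul, map_natCast] at this
      rw [map_mul, map_pow, ← this]; ring
    have hg0 : gaussSum χ' ψ ≠ 0 :=
      gaussSum_ne_zero_of_nontrivial (by rw [ZMod.card]; exact hlF) hχ'1 hψ
    have hq2 := gauss_q2 h3 hql χ' hχ'3 ψ
    rw [hT, ← pow_mul, Nat.mul_div_cancel' (three_dvd hq.out h3)]
    apply mul_right_cancel₀ hg0
    rw [← pow_succ, Nat.sub_add_cancel (Nat.one_le_pow _ _ hq.out.pos), hq2]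
    rfl

end Eis

namespace Eis
open scoped QuadraticAlgebra

/-- if the norm `k` of `D` times ... divides -/
theorem dvd_aux {J C : Eis} {l : ℕ} (hl : l.Prime) (hJ : J.norm = l) {v : ℤ} (hv : ¬ (l : ℤ) ∣ v)
    (h : J ∣ (v : Eis) * C) : J ∣ C := by
  have hco : IsCoprime v (l : ℤ) := by
    rw [Int.isCoprime_iff_gcd_eq_one, Int.gcd_comm, ← Int.isCoprime_iff_gcd_eq_one]
    exact (Nat.prime_iff_prime_int.1 hl).coprime_iff_not_dvd.2 hv
  obtain ⟨s, t, hst⟩ := hco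
  have hl' : J ∣ ((l : ℤ) : Eis) := ⟨star J, by
    rw [← QuadraticAlgebra.algebraMap_norm_eq_mul_star, hJ]; simp⟩
  have e : C = (s : Eis) * ((v : Eis) * C) + ((l : ℤ) : Eis) * ((t : Eis) * C) := by
    have : ((s * v + t * l : ℤ) : Eis) = 1 := by rw [hst]; simp
    push_cast at this
    push_cast
    linear_combination (-C) * this
  rw [e]
  exact dvd_add (h.mul_left _) (hl'.mul_right _)

theorem not_dvd_im {J : Eis} {l : ℕ} (hl : l.Prime) (hJ : J.norm = l) : ¬ (l : ℤ) ∣ J.im := by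
  intro h
  have hp := Nat.prime_iff_prime_int.1 hl
  have h1 := hJ
  rw [norm_eq] at h1
  have h2 : (l : ℤ) ∣ J.re ^ 2 := by
    have : J.re ^ 2 = l + J.re * J.im - J.im * J.im := by rw [← h1]; ring
    rw [this]
    exact dvd_sub (dvd_add dvd_rfl (h.mul_left _)) (h.mul_left _)
  have h3 := hp.dvd_of_dvd_pow h2
  obtain ⟨x, hx⟩ := h3
  obtain ⟨y, hy⟩ := h
  have h0 : (l : ℤ) ≠ 0 := by exact_mod_cast hl.ne_zero
  have h4 : (l : ℤ) * (x ^ 2 - x * y + y ^ 2) = 1 := by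
    apply mul_left_cancel₀ h0
    rw [hx, hy] at h1
    linear_combination h1
  exact hp.not_isUnit (IsUnit.of_mul_eq_one _ h4)

theorem dvd_or {J C : Eis} {l : ℕ} (hl : l.Prime) (hJ : J.norm = l) (hC : (l : ℤ) ∣ C.norm) :
    J ∣ C ∨ star J ∣ C := by
  have hp := Nat.prime_iff_prime_int.1 hl
  have hv := not_dvd_im hl hJ
  have hn := hJ
  rw [norm_eq] at hJ hC
  have h1 : (l : ℤ) ∣ (J.im * C.re - C.im * J.re) * (J.im * C.re + C.im * (J.re - J.im)) := by
    have : (J.im * C.re - C.im * J.re) * (J.im * C.re + C.im * (J.re - J.im)) =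
      J.im ^ 2 * (C.re ^ 2 - C.re * C.im + C.im ^ 2) - C.im ^ 2 * l := by
      rw [← hJ]; ring
    rw [this]
    exact dvd_sub (hC.mul_left _) (dvd_mul_left _ _)
  have hl1 : ((l : ℤ) : Eis) = J * star J := by
    rw [← QuadraticAlgebra.algebraMap_norm_eq_mul_star, hn]; simp
  rcases hp.dvd_or_dvd h1 with ⟨k, hk⟩ | ⟨k, hk⟩
  · left
    apply dvd_aux hl hn hv
    refine ⟨(C.im : Eis) + star J * (k : Eis), ?_⟩
    have e : (J.im : Eis) * C - (C.im : Eis) * J = ((J.im * C.re - C.im * J.re : ℤ) : Eis) := by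
      ext <;> simp <;> ring
    rw [hk] at e
    rw [Int.cast_mul, hl1] at e
    linear_combination e
  · right
    apply dvd_aux (J := star J) hl (by rw [QuadraticAlgebra.norm_star]; exact hn) hv
    refine ⟨-(C.im : Eis) + J * (k : Eis), ?_⟩
    have e : (J.im : Eis) * C + (C.im : Eis) * star J =
        ((J.im * C.re + C.im * (J.re - J.im) : ℤ) : Eis) := by
      ext
      · simp; left; ring
      · simp; ring
    rw [hk] at e
    rw [Int.cast_mul, hl1] at e
    linear_combination e

theorem inert_dvd {C : Eis} {l : ℕ} (hl : l.Prime) (h2 : l % 3 = 2) (hC : (l : ℤ) ∣ C.norm) :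
    ((l : ℤ) : Eis) ∣ C := by
  have : Fact l.Prime := ⟨hl⟩
  have key : ∀ x y : ZMod l, x ^ 2 - x * y + y ^ 2 = 0 → y = 0 := by
    intro x y h
    by_contra hy
    set t := -x / y with ht
    have ht1 : t ^ 2 + t + 1 = 0 := by rw [ht]; field_simp; linear_combination h
    have ht3 : t ^ 3 = 1 := by linear_combination (t - 1) * ht1
    have ht0 : t ≠ 0 := by rintro h0; rw [h0] at ht1; simp at ht1
    have hf := ZMod.pow_card_sub_one_eq_one ht0
    have : l - 1 = 3 * (l / 3) + 1 := by omega
    rw [this, pow_succ, pow_mul, ht3, one_pow, one_mul] at hf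
    rw [hf] at ht1
    have h3 : ((3 : ℕ) : ZMod l) = 0 := by push_cast; linear_combination ht1
    rw [ZMod.natCast_eq_zero_iff, Nat.prime_dvd_prime_iff_eq hl Nat.prime_three] at h3
    omega
  have h0 : ((C.re : ZMod l)) ^ 2 - (C.re : ZMod l) * C.im + (C.im : ZMod l) ^ 2 = 0 := by
    rw [← ZMod.intCast_zmod_eq_zero_iff_dvd, norm_eq] at hC
    exact_mod_cast hC
  have h1 := key _ _ h0
  have h3 := key (C.im : ZMod l) (C.re : ZMod l) (by linear_combination h0)
  rw [ZMod.intCast_zmod_eq_zero_iff_dvd] at h1 h3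
  obtain ⟨x, hx⟩ := h1
  obtain ⟨y, hy⟩ := h3
  refine ⟨⟨y, x⟩, ?_⟩
  ext <;> simp [hx, hy]

theorem quot_primary {D K : Eis} (hD : 3 ∣ D.im) (hD' : ¬ 3 ∣ D.re) (h : 3 ∣ (D * K).im)
    (h' : ¬ 3 ∣ (D * K).re) : 3 ∣ K.im ∧ ¬ 3 ∣ K.re := by
  have e1 : (D * K).im = D.re * K.im + D.im * (K.re - K.im) := by simp; ring
  have e2 : (D * K).re = D.re * K.re - D.im * K.im := by simp; ring
  rw [e1] at h
  rw [e2] at h'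
  constructor
  · have := (Int.dvd_add_left (hD.mul_right _)).1 h
    exact (Int.prime_three.dvd_or_dvd this).resolve_left hD'
  · intro h3
    exact h' (dvd_sub (h3.mul_left _) (hD.mul_right _))

theorem good_primary (n : ℕ) : ∀ C : Eis, C.norm.natAbs = n → 3 ∣ C.im → ¬ 3 ∣ C.re → Good C := by
  induction n using Nat.strong_induction_on with
  | _ n ih =>
  intro C hn h3 h3'
  have hnn := norm_nonneg C
  have hC3 : ¬ (3 : ℤ) ∣ C.norm := by
    rw [norm_eq]
    intro h
    have : (3 : ℤ) ∣ C.re ^ 2 := by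
      have e : C.re ^ 2 = (C.re ^ 2 - C.re * C.im + C.im ^ 2) + C.im * (C.re - C.im) := by ring
      rw [e]; exact dvd_add h (h3.mul_right _)
    exact h3' (Int.prime_three.dvd_of_dvd_pow this)
  have hC0 : C.norm ≠ 0 := by intro h; rw [h] at hC3; simp at hC3
  have step : ∀ D K : Eis, C = D * K → 1 < D.norm → 3 ∣ D.im → ¬ 3 ∣ D.re → Good D → Good C := by
    rintro D K rfl hD1 hD hD' hg
    obtain ⟨hK, hK'⟩ := quot_primary hD hD' h3 h3'
    refine hg.mul (ih _ ?_ K rfl hK hK')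
    rw [map_mul] at hn hC0
    rw [← hn, Int.natAbs_mul]
    have hK0 : K.norm ≠ 0 := right_ne_zero_of_mul hC0
    have : 0 < K.norm.natAbs := Int.natAbs_pos.2 hK0
    have h1 : 1 < D.norm.natAbs := by omega
    nlinarith
  by_cases h1 : n = 1
  · have hN : C.norm = 1 := by omega
    rw [norm_eq] at hN
    have him : C.im = 0 := by
      obtain ⟨k, hk⟩ := h3
      rw [hk] at hN ⊢
      have : k = 0 := by
        have : k ^ 2 < 1 := by nlinarith [sq_nonneg (2 * C.re - 3 * k)]
        nlinarith
      simp [this]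
    have : C = (C.re : Eis) := by ext <;> simp [him]
    rw [this]; exact good_int _
  · obtain ⟨l, hl, hdvd⟩ := Nat.exists_prime_and_dvd h1
    rw [← hn] at hdvd
    have hdvd' : (l : ℤ) ∣ C.norm := Int.natCast_dvd.2 hdvd
    have hl1 := hl.one_lt
    have hl3 : l % 3 ≠ 0 := by
      intro h
      exact hC3 (dvd_trans (by exact_mod_cast Nat.dvd_of_mod_eq_zero h) hdvd')
    have : l % 3 = 1 ∨ l % 3 = 2 := by omega
    rcases this with h | h
    · have : Fact l.Prime := ⟨hl⟩
      obtain ⟨J, hJ, hJ1, hJ2, hJ3⟩ := exists_J l h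
      rcases dvd_or hl hJ hdvd' with ⟨K, hK⟩ | ⟨K, hK⟩
      · exact step J K hK (by rw [hJ]; exact_mod_cast hl1) hJ1 hJ2 hJ3
      · refine step (Star.star J) K hK (by rw [QuadraticAlgebra.norm_star, hJ]; exact_mod_cast hl1)
          ?_ ?_ hJ3.star
        · simpa using hJ1
        · simp; omega
    · obtain ⟨K, hK⟩ := inert_dvd hl h hdvd'
      refine step _ K hK ?_ ?_ ?_ (good_int _)
      · rw [QuadraticAlgebra.norm_intCast, Int.cast_id]
        have : (1 : ℤ) < l := by exact_mod_cast hl1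
        nlinarith
      · simp
      · simp; omega

end Eis

namespace Eis
open scoped QuadraticAlgebra

def mkHom {F : Type*} [Field F] (t : F) (ht : t ^ 2 + t + 1 = 0) : Eis →+* F where
  toFun z := z.re + z.im * t
  map_one' := by simp
  map_zero' := by simp
  map_add' x y := by simp; ring
  map_mul' x y := by simp; linear_combination (-(x.im : F) * y.im) * ht

theorem hom_apply {F : Type*} [Field F] (h : Eis →+* F) (z : Eis) :
    h z = z.re + z.im * h w := by
  have : z = (z.re : Eis) + (z.im : Eis) * w := by ext <;> simp [w]
  conv_lhs => rw [this]
  simp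

theorem hom_w {F : Type*} [Field F] (h : Eis →+* F) : h w ^ 2 + h w + 1 = 0 := by
  have := congrArg h w_sq
  simpa using this

theorem exists_hom (F : Type*) [Field F] [IsAlgClosed F] : Nonempty (Eis →+* F) := by
  have hd : (Polynomial.cyclotomic 3 F).degree ≠ 0 := by
    rw [Polynomial.degree_cyclotomic]; decide
  obtain ⟨t, ht⟩ := IsAlgClosed.exists_root _ hd
  rw [Polynomial.cyclotomic_three] at ht
  exact ⟨mkHom t (by simpa using ht)⟩

theorem sq_pow {q : ℕ} [hq : Fact q.Prime] (h2 : q ≠ 2) {F : Type*} [Field F] [CharP F q] {m : ℤ}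
    (h : (m : F) ≠ 0) {y : F} (hy : y ^ 2 = m) : y ^ (q ^ 2 - 1) = 1 := by
  have hodd := hq.out.eq_two_or_odd.resolve_left h2
  have h1 : (m : F) ^ (q - 1) = 1 := by
    have h1 : (m : F) ^ q = m := by
      have : ((m : ZMod q) : ZMod q) ^ q = m := ZMod.pow_card _
      have h2 := congrArg (ZMod.castHom (dvd_refl q) F) this
      rwa [map_pow, map_intCast] at h2
    have h3 : (m : F) ^ (q - 1) * m = m := by
      rw [← pow_succ, Nat.sub_add_cancel hq.out.pos, h1]
    exact mul_right_cancel₀ h (by rw [h3, one_mul])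
  obtain ⟨k, hk⟩ : ∃ k, q = 2 * k + 1 := ⟨q / 2, by omega⟩
  have e : q ^ 2 - 1 = 2 * ((q - 1) * (k + 1)) := by
    have : q ^ 2 = 2 * ((q - 1) * (k + 1)) + 1 := by
      rw [hk, Nat.add_sub_cancel]; ring
    omega
  rw [e, pow_mul, hy, pow_mul, h1, one_pow]

theorem phi_eval {p : ℕ} [hp : Fact p.Prime] (hp2 : p ≠ 2) (hp3 : p ≠ 3) {a b : ℤ}
    (hab : a ^ 2 + 11 * b ^ 2 = 108 * p) (hb3 : ¬ 3 ∣ b) (hbp : ¬ (p : ℤ) ∣ b) {C : Eis}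
    (him : C.im = 3 * a) (hre : 2 * C.re = 13 * b + 3 * a)
    (h : Eis →+* AlgebraicClosure (ZMod p)) :
    h (T C) ^ ((p ^ 2 - 1) / 3) = 1 ↔ Even a := by
  have hpodd := hp.out.eq_two_or_odd.resolve_left hp2
  have hN : C.norm = 729 * p - 32 * b ^ 2 := by
    rw [norm_eq, him]
    have : 4 * (C.re ^ 2 - C.re * (3 * a) + (3 * a) ^ 2) = 4 * (729 * p - 32 * b ^ 2) := by
      linear_combination (2 * C.re + 13 * b + 3 * a - 6 * a) * hre + 27 * hab
    linarith
  have hN0 := norm_nonneg C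
  obtain ⟨φ, f1, f2, f3⟩ := good_primary _ C rfl (by rw [him]; exact dvd_mul_right _ _) (by omega)
  have hcharP : ∀ q : ℕ, ∀ _ : Fact q.Prime, CharP (AlgebraicClosure (ZMod q)) q := fun q _ =>
    charP_of_injective_algebraMap (algebraMap (ZMod q) (AlgebraicClosure (ZMod q))).injective q
  -- coprimality
  have hcop : ∀ q : ℕ, q.Prime → ¬ (q : ℤ) ∣ C.norm → q.Coprime C.norm.natAbs := by
    intro q hq h
    rw [hq.coprime_iff_not_dvd]
    rwa [Int.natCast_dvd] at h
  have hN3 : ¬ (3 : ℤ) ∣ C.norm := by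
    rw [hN]
    intro h
    have : (3 : ℤ) ∣ b ^ 2 := by omega
    exact hb3 (Int.prime_three.dvd_of_dvd_pow this)
  have hN2 : ¬ ((2 : ℕ) : ℤ) ∣ C.norm := by rw [hN]; omega
  have pP := Nat.prime_iff_prime_int.1 hp.out
  have hNp : ¬ (p : ℤ) ∣ C.norm := by
    rw [hN]
    intro h
    have h1 : (p : ℤ) ∣ 2 ^ 5 * b ^ 2 := by
      have := dvd_sub (dvd_mul_left (p : ℤ) 729) h
      ring_nf at this ⊢; exact this
    rcases pP.dvd_or_dvd h1 with h | h
    · have := pP.dvd_of_dvd_pow h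
      have h2 : p ∣ 2 := by exact_mod_cast this
      exact hp2 ((Nat.prime_dvd_prime_iff_eq hp.out Nat.prime_two).1 h2)
    · exact hbp (pP.dvd_of_dvd_pow h)
  have c2 := f1 2 (hcop 2 Nat.prime_two hN2)
  have c3 := f1 3 (hcop 3 Nat.prime_three hN3)
  have cp := f1 p (hcop p hp.out hNp)
  have hne : ∀ q : ℕ, ∀ _ : Fact q.Prime, q ≠ 3 → (3 : AlgebraicClosure (ZMod q)) ≠ 0 := by
    intro q hq hq3 h0
    have := hcharP q hq
    have h0' : ((3 : ℕ) : AlgebraicClosure (ZMod q)) = 0 := by exact_mod_cast h0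
    rw [CharP.cast_eq_zero_iff _ q] at h0'
    exact hq3 ((Nat.prime_dvd_prime_iff_eq hq.out Nat.prime_three).1 h0')
  -- the value at 2
  have key2 : φ 2 = 1 ↔ Even a := by
    have F2 : Fact (Nat.Prime 2) := ⟨Nat.prime_two⟩
    obtain ⟨g⟩ := exists_hom (AlgebraicClosure (ZMod 2))
    have hch := hcharP 2 F2
    have hg := f3 2 F2 (by norm_num) (hcop 2 Nat.prime_two hN2) g
    norm_num at hg
    have hT : g (T C) = g C := by
      have : T C = C * (C * star C) := by rw [T]; ring
      rw [this, ← QuadraticAlgebra.algebraMap_norm_eq_mul_star, map_mul]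
      have h1 : ((C.norm : ℤ) : AlgebraicClosure (ZMod 2)) = 1 := by
        have : ((C.norm - 1 : ℤ) : AlgebraicClosure (ZMod 2)) = 0 := by
          rw [CharP.intCast_eq_zero_iff _ 2]; omega
        push_cast at this
        linear_combination this
      simp [h1]
    rw [hT] at hg
    have t := hom_w g
    rw [hom_apply] at hg
    constructor
    · intro h1
      rw [h1, map_one] at hg
      by_contra ha
      rw [Int.not_even_iff_odd] at ha
      have h1 : ((C.im : ℤ) : AlgebraicClosure (ZMod 2)) = 1 := by
        have : ((C.im - 1 : ℤ) : AlgebraicClosure (ZMod 2)) = 0 := by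
          rw [CharP.intCast_eq_zero_iff _ 2]
          obtain ⟨k, hk⟩ := ha
          omega
        push_cast at this
        linear_combination this
      rw [h1, one_mul] at hg
      have hw : g w = ((1 - C.re : ℤ) : AlgebraicClosure (ZMod 2)) := by
        push_cast; linear_combination hg
      rw [hw] at t
      have t' : (((1 - C.re) ^ 2 + (1 - C.re) + 1 : ℤ) : AlgebraicClosure (ZMod 2)) = 0 := by
        exact_mod_cast t
      rw [CharP.intCast_eq_zero_iff _ 2] at t'
      have hev : Even ((1 - C.re) ^ 2 + (1 - C.re) + 1) := even_iff_two_dvd.2 (by exact_mod_cast t')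
      have : Even ((1 - C.re) * ((1 - C.re) + 1)) := Int.even_mul_succ_self _
      obtain ⟨x, hx⟩ := hev
      obtain ⟨y, hy⟩ := this
      have : 2 * x = 2 * y + 1 := by linarith [hx, hy, (by ring : (1 - C.re) * ((1 - C.re) + 1) = (1 - C.re) ^ 2 + (1 - C.re))]
      omega
    · rintro ⟨a', ha'⟩
      have hbe : Even b := by
        have : Even (b ^ 2) := by
          have : 11 * b ^ 2 = 108 * p - 4 * a' ^ 2 := by rw [← hab, ha']; ring
          rw [even_iff_two_dvd]; omega
        exact (Int.even_pow.1 this).1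
      obtain ⟨b', hb'⟩ := hbe
      have hs : a' ^ 2 + 11 * b' ^ 2 = 27 * p := by rw [ha', hb'] at hab; linarith
      have hre' : C.re = 13 * b' + 3 * a' := by omega
      have h1 : (((C.re - 1 : ℤ)) : AlgebraicClosure (ZMod 2)) = 0 := by
        rw [CharP.intCast_eq_zero_iff _ 2, hre']
        rcases Int.even_or_odd' a' with ⟨x, hx | hx⟩ <;> rcases Int.even_or_odd' b' with ⟨y, hy | hy⟩
        · exfalso; subst hx hy; ring_nf at hs; omega
        · omega
        · omega
        · exfalso; subst hx hy; ring_nf at hs; omega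
      have h2 : (((C.im : ℤ)) : AlgebraicClosure (ZMod 2)) = 0 := by
        rw [CharP.intCast_eq_zero_iff _ 2]; omega
      apply hom_inj (hne 2 F2 (by norm_num)) g c2
      rw [← hg, h2]
      push_cast at h1
      linear_combination h1
  -- the value at odd primes dividing b
  have hP : ∀ q : ℕ, ∀ _ : q.Prime, (q : ℤ) ∣ b → φ q = 1 := by
    intro q hq' hqb
    by_cases hq2 : q = 2
    · subst hq2
      rw [key2]
      have : Even (a ^ 2) := by
        obtain ⟨b', hb'⟩ := hqb
        have : a ^ 2 = 108 * p - 44 * b' ^ 2 := by rw [hb'] at hab; push_cast at hab; linarith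
        rw [even_iff_two_dvd]; omega
      exact (Int.even_pow.1 this).1
    have hq : Fact q.Prime := ⟨hq'⟩
    have hch := hcharP q hq
    have hq3 : q ≠ 3 := by rintro rfl; exact hb3 hqb
    have hqp : q ≠ p := by rintro rfl; exact hbp hqb
    have qP := Nat.prime_iff_prime_int.1 hq'
    have hq3p : ∀ k : ℕ, ¬ (q : ℤ) ∣ 2 ^ 2 * 3 ^ k * p := by
      intro k hd
      have hd' : q ∣ 2 ^ 2 * 3 ^ k * p := by exact_mod_cast hd
      rcases (Nat.Prime.dvd_mul hq').1 hd' with h | h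
      · rcases (Nat.Prime.dvd_mul hq').1 h with h | h
        · exact hq2 ((Nat.prime_dvd_prime_iff_eq hq' Nat.prime_two).1 (hq'.dvd_of_dvd_pow h))
        · exact hq3 ((Nat.prime_dvd_prime_iff_eq hq' Nat.prime_three).1 (hq'.dvd_of_dvd_pow h))
      · exact hqp ((Nat.prime_dvd_prime_iff_eq hq' hp.out).1 h)
    have hqN : ¬ (q : ℤ) ∣ C.norm := by
      rw [hN]
      intro hd
      apply hq3p 6
      have e : (2 ^ 2 * 3 ^ 6 * p : ℤ) = 2 ^ 2 * (729 * p - 32 * b ^ 2) + b * (128 * b) := by ring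
      rw [e]
      exact dvd_add (hd.mul_left _) (hqb.mul_right _)
    have hqa : ¬ (q : ℤ) ∣ a := by
      intro hd
      apply hq3p 3
      have e : (2 ^ 2 * 3 ^ 3 * p : ℤ) = a * a + b * (11 * b) := by linarith
      rw [e]
      exact dvd_add (hd.mul_right _) (hqb.mul_right _)
    obtain ⟨g⟩ := exists_hom (AlgebraicClosure (ZMod q))
    apply hom_inj (hne q hq hq3) g (f1 q (hcop q hq' hqN))
    rw [← f3 q hq hq3 (hcop q hq' hqN) g]
    set F := AlgebraicClosure (ZMod q)
    have t := hom_w g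
    have b0 : (b : F) = 0 := (CharP.intCast_eq_zero_iff _ q _).2 hqb
    have a0 : (a : F) ≠ 0 := fun h => hqa ((CharP.intCast_eq_zero_iff _ q _).1 h)
    have two0 : (2 : F) ≠ 0 := by
      intro h0
      have h0' : ((2 : ℕ) : F) = 0 := by exact_mod_cast h0
      rw [CharP.cast_eq_zero_iff _ q] at h0'
      exact hq2 ((Nat.prime_dvd_prime_iff_eq hq' Nat.prime_two).1 h0')
    have three0 := hne q hq hq3
    have hre' : 2 * (C.re : F) = 3 * a := by
      have := congrArg (Int.cast : ℤ → F) hre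
      push_cast at this
      rw [this, b0]; ring
    have him' : (C.im : F) = 3 * a := by rw [him]; push_cast; ring
    set y : F := a * (1 + 2 * g w) with hy
    have hyy : y ^ 2 = ((-3 * a ^ 2 : ℤ) : F) := by
      push_cast; rw [hy]; linear_combination (4 * (a : F) ^ 2) * t
    have gC : 2 * g C = 3 * y := by
      rw [hom_apply, him', hy]; linear_combination hre'
    have gS : 2 * g (star C) = -3 * y := by
      rw [hom_apply, hy, QuadraticAlgebra.re_star, QuadraticAlgebra.im_star]
      push_cast
      rw [him']; linear_combination hre'
    have e8 : ((2 : ℤ) : F) ^ 3 * g (T C) = ((-3 : ℤ) : F) ^ 3 * y ^ 3 := by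
      rw [T, map_mul, map_pow]
      push_cast
      linear_combination (2 * g C + 3 * y) * (2 * g (star C)) * gC + 9 * y ^ 2 * gS
    have hpw := congrArg (· ^ ((q ^ 2 - 1) / 3)) e8
    simp only [mul_pow] at hpw
    rw [cube_pow hq3 _ (by push_cast; exact two0), cube_pow hq3 _ (by push_cast; simpa using three0),
      one_mul, one_mul, ← pow_mul, Nat.mul_div_cancel' (three_dvd hq' hq3)] at hpw
    rw [hpw]
    refine sq_pow hq2 ?_ hyy
    push_cast
    simp [three0, a0]
  have hm : ∀ m : ℕ, m ≠ 0 → (m : ℤ) ∣ b → φ m = 1 := by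
    intro m
    induction m using Nat.recOnMul with
    | zero => intro h; exact absurd rfl h
    | one => intro _ _; exact map_one φ
    | prime q hq => intro _ h; exact hP q hq h
    | mul x y hx hy =>
      intro h0 hd
      push_cast at hd
      rw [map_mul, hx (left_ne_zero_of_mul h0) (dvd_of_mul_right_dvd hd),
        hy (right_ne_zero_of_mul h0) (dvd_of_mul_left_dvd hd), one_mul]
  have hb1 : φ b.natAbs = 1 := by
    apply hm
    · intro h0
      rw [Int.natAbs_eq_zero] at h0
      rw [h0] at hbp; simp at hbp
    · exact Int.natAbs_dvd.2 dvd_rfl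
  have hmod : φ (3 ^ 6 * p) = φ (2 ^ 5 * b.natAbs ^ 2) := by
    apply f2
    apply Nat.ModEq.symm
    rw [← Int.natCast_modEq_iff, Int.modEq_iff_dvd]
    push_cast
    rw [sq_abs, abs_of_nonneg hN0, hN]
  have hfin : φ p = φ 2 ^ 2 := by
    rw [map_mul, map_mul, map_pow, map_pow, map_pow, hb1] at hmod
    have e3 : φ 3 ^ 6 = 1 := by rw [show 6 = 3 * 2 from rfl, pow_mul, c3, one_pow]
    rw [e3, one_pow, one_mul, mul_one, show 5 = 3 + 2 from rfl, pow_add, c2, one_mul] at hmod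
    exact hmod
  rw [f3 p hp hp3 (hcop p hp.out hNp) h, ← key2]
  constructor
  · intro h1
    have := hom_inj (hne p hp hp3) h cp h1
    rw [this] at hfin
    rw [pow_succ, ← hfin, one_mul] at c2
    exact c2
  · intro h1
    rw [hfin, h1]; simp

end Eis

namespace Eis

theorem form_lemma (n : ℕ) : ∀ a b c : ℤ, 0 < a → a.toNat = n → b ^ 2 + 11 = 4 * a * c →
    ∃ x y z w : ℤ, a = x ^ 2 + x * y + 3 * y ^ 2 ∧ c = z ^ 2 + z * w + 3 * w ^ 2 ∧
      b = 2 * x * z + x * w + y * z + 6 * y * w := by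
  induction n using Nat.strong_induction_on with
  | _ n ih =>
  intro a b c ha hn h
  obtain ⟨k, b', hb, h1, h2⟩ : ∃ k b' : ℤ, b = b' + 2 * a * k ∧ -a ≤ b' ∧ b' < a := by
    refine ⟨(b + a) / (2 * a), (b + a) % (2 * a) - a, ?_, ?_, ?_⟩
    · have := Int.emod_add_mul_ediv (b + a) (2 * a)
      linarith
    · have := Int.emod_nonneg (b + a) (show 2 * a ≠ 0 by omega)
      omega
    · have := Int.emod_lt_of_pos (b + a) (show 0 < 2 * a by omega)
      omega
  obtain ⟨c', hc⟩ : ∃ c', c = c' + k * b' + k ^ 2 * a := ⟨c - k * b' - k ^ 2 * a, by ring⟩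
  have h' : b' ^ 2 + 11 = 4 * a * c' := by
    rw [hb, hc] at h; linear_combination h
  suffices hs : ∃ x y z w : ℤ, a = x ^ 2 + x * y + 3 * y ^ 2 ∧ c' = z ^ 2 + z * w + 3 * w ^ 2 ∧
      b' = 2 * x * z + x * w + y * z + 6 * y * w by
    obtain ⟨x, y, z, w, e1, e2, e3⟩ := hs
    refine ⟨x, y, z + k * x, w + k * y, e1, ?_, ?_⟩
    · rw [hc, e2, e3, e1]; ring
    · rw [hb, e3, e1]; ring
  have hc0 : 0 < c' := by
    by_contra hcon
    push Not at hcon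
    nlinarith [sq_nonneg b']
  by_cases hca : c' < a
  · obtain ⟨x, y, z, w, e1, e2, e3⟩ := ih c'.toNat (by omega) c' b' a hc0 rfl (by linarith)
    exact ⟨z, w, x, y, e2, e1, by rw [e3]; ring⟩
  · push Not at hca
    have h3 : b' ^ 2 ≤ a ^ 2 := by nlinarith
    have h4 : 4 * a * a ≤ 4 * a * c' := by nlinarith
    have ha1 : a = 1 := by nlinarith
    subst ha1
    have : b' = -1 ∨ b' = 0 := by omega
    rcases this with rfl | rfl
    · exact ⟨1, 0, 0, -1, by norm_num, by norm_num at h' ⊢; omega, by norm_num⟩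
    · omega

theorem exists_rep {p : ℕ} (hp : p.Prime) (hp2 : p ≠ 2) {r : ℤ} (hr : (p : ℤ) ∣ r ^ 2 + 11) :
    ∃ x y : ℤ, (p : ℤ) = x ^ 2 + x * y + 3 * y ^ 2 := by
  have hodd := hp.eq_two_or_odd.resolve_left hp2
  obtain ⟨r', hr', ho⟩ : ∃ r' : ℤ, (p : ℤ) ∣ r' ^ 2 + 11 ∧ r' % 2 = 1 := by
    by_cases h : r % 2 = 1
    · exact ⟨r, hr, h⟩
    · refine ⟨r + p, ?_, by omega⟩
      have : (r + p) ^ 2 + 11 = (r ^ 2 + 11) + p * (2 * r + p) := by ring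
      rw [this]
      exact dvd_add hr (dvd_mul_right _ _)
  have h4 : (4 : ℤ) ∣ r' ^ 2 + 11 := by
    obtain ⟨k, hk⟩ : ∃ k, r' = 2 * k + 1 := ⟨r' / 2, by omega⟩
    exact ⟨k ^ 2 + k + 3, by rw [hk]; ring⟩
  have hco : IsCoprime (4 : ℤ) p := by
    have : Nat.Coprime 4 p := by
      have : Nat.Coprime (2 ^ 2) p := Nat.Coprime.pow_left 2 ((Nat.coprime_primes Nat.prime_two hp).2 hp2.symm)
      exact this
    exact_mod_cast Nat.isCoprime_iff_coprime.2 this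
  obtain ⟨c, hc⟩ := hco.mul_dvd h4 hr'
  obtain ⟨x, y, _, _, h, _⟩ := form_lemma _ p r' c (by exact_mod_cast hp.pos) rfl hc
  exact ⟨x, y, h⟩

theorem transfer {p : ℕ} (hp : p.Prime) (hp2 : p ≠ 2) (hp3 : p ≠ 3) {a0 b0 : ℤ}
    (h : a0 ^ 2 + 11 * b0 ^ 2 = 4 * p) : ∃ a b : ℤ, a ^ 2 + 11 * b ^ 2 = 108 * p ∧ ¬ 3 ∣ b ∧
      ¬ (p : ℤ) ∣ b ∧ (Even a ↔ Even b0) ∧ ∃ C : Eis, C.im = 3 * a ∧ 2 * C.re = 13 * b + 3 * a := by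
  have hodd := hp.eq_two_or_odd.resolve_left hp2
  have hab : (4 * a0 - 11 * b0) ^ 2 + 11 * (a0 + 4 * b0) ^ 2 = 108 * p := by
    linear_combination 27 * h
  have h3p : ¬ 3 ∣ p := fun hd => hp3 ((Nat.prime_dvd_prime_iff_eq Nat.prime_three hp).1 hd).symm
  have pP := Nat.prime_iff_prime_int.1 hp
  refine ⟨4 * a0 - 11 * b0, a0 + 4 * b0, hab, ?_, ?_, ?_, ?_⟩
  · rintro ⟨k, hk⟩
    have : a0 = 3 * k - 4 * b0 := by linarith
    rw [this] at h
    ring_nf at h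
    omega
  · intro hd
    obtain ⟨k, hk⟩ := hd
    rw [hk] at hab
    have h1 : (p : ℤ) ∣ (4 * a0 - 11 * b0) ^ 2 :=
      ⟨108 - 11 * p * k ^ 2, by linear_combination hab⟩
    obtain ⟨m, hm⟩ := pP.dvd_of_dvd_pow h1
    rw [hm] at hab
    have p0 : (p : ℤ) ≠ 0 := by exact_mod_cast hp.ne_zero
    have h2 : (p : ℤ) * (m ^ 2 + 11 * k ^ 2) = 108 := by
      apply mul_left_cancel₀ p0; linear_combination hab
    have h3 : (p : ℤ) ∣ ((2 ^ 2 * 3 ^ 3 : ℕ) : ℤ) := ⟨_, by rw [h2]; norm_num⟩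
    have h4 : p ∣ 2 ^ 2 * 3 ^ 3 := by exact_mod_cast h3
    rcases (Nat.Prime.dvd_mul hp).1 h4 with h | h
    · exact hp2 ((Nat.prime_dvd_prime_iff_eq hp Nat.prime_two).1 (hp.dvd_of_dvd_pow h))
    · exact hp3 ((Nat.prime_dvd_prime_iff_eq hp Nat.prime_three).1 (hp.dvd_of_dvd_pow h))
  · simp only [Int.even_iff]; omega
  · refine ⟨⟨(13 * (a0 + 4 * b0) + 3 * (4 * a0 - 11 * b0)) / 2, 3 * (4 * a0 - 11 * b0)⟩, rfl, ?_⟩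
    have hpar : (a0 + b0) % 2 = 0 := by
      rcases Int.even_or_odd' a0 with ⟨x, hx | hx⟩ <;> rcases Int.even_or_odd' b0 with ⟨y, hy | hy⟩
      · omega
      · exfalso; subst hx hy; ring_nf at h; omega
      · exfalso; subst hx hy; ring_nf at h; omega
      · omega
    change 2 * ((13 * (a0 + 4 * b0) + 3 * (4 * a0 - 11 * b0)) / 2) = _
    omega

section roots

variable {p : ℕ} [hp : Fact p.Prime] {F : Type*} [Field F] [CharP F p]

theorem binet (B : ℕ → ℤ) (h0 : B 0 = 0) (h1 : B 1 = 0) (h2 : B 2 = 1)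
    (hrec : ∀ n, B (n + 3) = 2 * B (n + 2) - 4 * B (n + 1) + 4 * B n) {x y z : F}
    (e1 : x + y + z = 2) (e2 : x * y + y * z + z * x = 4) (e3 : x * y * z = 4) (n : ℕ) :
    (B n : F) * ((x - y) * (y - z) * (z - x)) =
      -(x ^ n * (y - z) + y ^ n * (z - x) + z ^ n * (x - y)) := by
  have root : ∀ x y z : F, x + y + z = 2 → x * y + y * z + z * x = 4 → x * y * z = 4 →
      x ^ 3 = 2 * x ^ 2 - 4 * x + 4 := by
    intro x y z e1 e2 e3
    linear_combination x ^ 2 * e1 - x * e2 + e3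
  have rx := root x y z e1 e2 e3
  have ry := root y z x (by rw [← e1]; ring) (by rw [← e2]; ring) (by rw [← e3]; ring)
  have rz := root z x y (by rw [← e1]; ring) (by rw [← e2]; ring) (by rw [← e3]; ring)
  induction n using Nat.strong_induction_on with
  | _ n ih =>
  match n with
  | 0 => simp [h0]
  | 1 => simp [h1]; ring
  | 2 => simp [h2]; ring
  | n + 3 =>
    rw [hrec n]
    have i0 := ih n (by omega)
    have i1 := ih (n + 1) (by omega)
    have i2 := ih (n + 2) (by omega)
    push_cast
    linear_combination 2 * i2 - 4 * i1 + 4 * i0 + x ^ n * (y - z) * rx + y ^ n * (z - x) * ry +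
      z ^ n * (x - y) * rz

theorem disc {x y z : F}
    (e1 : x + y + z = 2) (e2 : x * y + y * z + z * x = 4) (e3 : x * y * z = 4) :
    ((x - y) * (y - z) * (z - x)) ^ 2 = -176 := by
  have hz : z = 2 - x - y := by linear_combination e1
  subst hz
  have e2' : x * y = 4 - (x + y) * (2 - x - y) := by linear_combination e2
  have id : ((x - y) * (y - (2 - x - y)) * ((2 - x - y) - x)) ^ 2 =
      (x * y + y * (2 - x - y) + (2 - x - y) * x) ^ 2 * 2 ^ 2
      - 4 * (x * y + y * (2 - x - y) + (2 - x - y) * x) ^ 3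
      - 4 * 2 ^ 3 * (x * y * (2 - x - y)) - 27 * (x * y * (2 - x - y)) ^ 2
      + 18 * 2 * (x * y + y * (2 - x - y) + (2 - x - y) * x) * (x * y * (2 - x - y)) := by ring
  rw [id, e2, e3]; norm_num

theorem perm_cases {x y z : F}
    (e1 : x + y + z = 2) (e2 : x * y + y * z + z * x = 4) (e3 : x * y * z = 4)
    (hxy : x ≠ y) (hyz : y ≠ z) (hzx : z ≠ x) :
    (x ^ p = x ∧ y ^ p = y ∧ z ^ p = z) ∨ (x ^ p = x ∧ y ^ p = z ∧ z ^ p = y) ∨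
    (x ^ p = y ∧ y ^ p = x ∧ z ^ p = z) ∨ (x ^ p = z ∧ y ^ p = y ∧ z ^ p = x) ∨
    (x ^ p = y ∧ y ^ p = z ∧ z ^ p = x) ∨ (x ^ p = z ∧ y ^ p = x ∧ z ^ p = y) := by
  have inj : ∀ a b : F, a ^ p = b ^ p → a = b := fun a b h => frobenius_inj F p h
  have fac : ∀ t : F, t ^ 3 - 2 * t ^ 2 + 4 * t - 4 = 0 → t = x ∨ t = y ∨ t = z := by
    intro t ht
    have : (t - x) * ((t - y) * (t - z)) = 0 := by
      linear_combination ht - t ^ 2 * e1 + t * e2 - e3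
    rcases mul_eq_zero.1 this with h | h
    · left; linear_combination h
    · rcases mul_eq_zero.1 h with h | h
      · right; left; linear_combination h
      · right; right; linear_combination h
  have fr : ∀ t : F, t ^ 3 - 2 * t ^ 2 + 4 * t - 4 = 0 → t ^ p = x ∨ t ^ p = y ∨ t ^ p = z := by
    intro t ht
    apply fac
    have := congrArg (frobenius F p) ht
    simp only [map_sub, map_add, map_mul, map_pow, map_ofNat, map_zero, frobenius_def] at this
    exact this
  have hx := fr x (by linear_combination x ^ 2 * e1 - x * e2 + e3)
  have hy := fr y (by linear_combination y ^ 2 * e1 - y * e2 + e3)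
  have hz := fr z (by linear_combination z ^ 2 * e1 - z * e2 + e3)
  have i1 : x ^ p ≠ y ^ p := fun h => hxy (inj _ _ h)
  have i2 : y ^ p ≠ z ^ p := fun h => hyz (inj _ _ h)
  have i3 : z ^ p ≠ x ^ p := fun h => hzx (inj _ _ h)
  rcases hx with hx | hx | hx <;> rcases hy with hy | hy | hy <;> rcases hz with hz | hz | hz <;>
    first
    | exact absurd (hx.trans hy.symm) i1
    | exact absurd (hy.trans hz.symm) i2
    | exact absurd (hz.trans hx.symm) i3
    | exact Or.inl ⟨hx, hy, hz⟩
    | exact Or.inr (Or.inl ⟨hx, hy, hz⟩)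
    | exact Or.inr (Or.inr (Or.inl ⟨hx, hy, hz⟩))
    | exact Or.inr (Or.inr (Or.inr (Or.inl ⟨hx, hy, hz⟩)))
    | exact Or.inr (Or.inr (Or.inr (Or.inr (Or.inl ⟨hx, hy, hz⟩))))
    | exact Or.inr (Or.inr (Or.inr (Or.inr (Or.inr (⟨hx, hy, hz⟩)))))

end roots

end Eis

namespace Eis
open scoped QuadraticAlgebra

section fin

variable {p : ℕ} [hp : Fact p.Prime] {F : Type*} [Field F] [CharP F p]

theorem delta_ne {x y z : F} (n2 : (2 : F) ≠ 0) (n11 : (11 : F) ≠ 0)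
    (e1 : x + y + z = 2) (e2 : x * y + y * z + z * x = 4) (e3 : x * y * z = 4) :
    (x - y) * (y - z) * (z - x) ≠ 0 := by
  intro h
  have hd := disc e1 e2 e3
  rw [h] at hd
  have : (2 : F) ^ 4 * 11 = 0 := by linear_combination hd
  exact mul_ne_zero (pow_ne_zero 4 n2) n11 this

theorem roots_ne {x y z : F} (h : (x - y) * (y - z) * (z - x) ≠ 0) : x ≠ y ∧ y ≠ z ∧ z ≠ x := by
  refine ⟨?_, ?_, ?_⟩ <;> rintro rfl <;> simp at h

theorem not_two_thirds {x y z : F} (n2 : (2 : F) ≠ 0) (n13 : (13 : F) ≠ 0)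
    (e1 : x + y + z = 2) (e2 : x * y + y * z + z * x = 4) (e3 : x * y * z = 4) :
    3 * x - 2 ≠ 0 := by
  intro h
  have f : x ^ 3 - 2 * x ^ 2 + 4 * x - 4 = 0 := by linear_combination x ^ 2 * e1 - x * e2 + e3
  have : (2 : F) ^ 2 * 13 = 0 := by
    linear_combination (-27) * f + (9 * x ^ 2 - 12 * x + 28) * h
  exact mul_ne_zero (pow_ne_zero 2 n2) n13 this

theorem roots_iff (B : ℕ → ℤ) (h0 : B 0 = 0) (h1 : B 1 = 0) (h2 : B 2 = 1)
    (hrec : ∀ n, B (n + 3) = 2 * B (n + 2) - 4 * B (n + 1) + 4 * B n) {x y z : F}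
    (n2 : (2 : F) ≠ 0) (n11 : (11 : F) ≠ 0) (n13 : (13 : F) ≠ 0)
    (e1 : x + y + z = 2) (e2 : x * y + y * z + z * x = 4) (e3 : x * y * z = 4) :
    (B p : F) = 0 ↔ (x ^ p = x ∧ y ^ p = y ∧ z ^ p = z) := by
  have hd := delta_ne n2 n11 e1 e2 e3
  obtain ⟨hxy, hyz, hzx⟩ := roots_ne hd
  have hb := binet B h0 h1 h2 hrec e1 e2 e3 p
  constructor
  · intro hB
    rw [hB, zero_mul] at hb
    have n8 : (2 : F) ^ 3 ≠ 0 := pow_ne_zero 3 n2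
    rcases perm_cases (p := p) e1 e2 e3 hxy hyz hzx with h | ⟨a, b, c⟩ | ⟨a, b, c⟩ | ⟨a, b, c⟩ |
      ⟨a, b, c⟩ | ⟨a, b, c⟩
    · exact h
    · exfalso
      rw [a, b, c] at hb
      refine mul_ne_zero (sub_ne_zero.2 hyz) (not_two_thirds n2 n13 e1 e2 e3) ?_
      linear_combination hb + (y - z) * e1
    · exfalso
      rw [a, b, c] at hb
      refine mul_ne_zero (sub_ne_zero.2 hxy) (not_two_thirds (x := z) (y := x) (z := y) n2 n13
        (by rw [← e1]; ring) (by rw [← e2]; ring) (by rw [← e3]; ring)) ?_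
      linear_combination hb + (x - y) * e1
    · exfalso
      rw [a, b, c] at hb
      refine mul_ne_zero (sub_ne_zero.2 hzx) (not_two_thirds (x := y) (y := z) (z := x) n2 n13
        (by rw [← e1]; ring) (by rw [← e2]; ring) (by rw [← e3]; ring)) ?_
      linear_combination hb + (z - x) * e1
    · exfalso
      rw [a, b, c] at hb
      apply n8
      linear_combination -hb + (x + y + z + 2) * e1 - 3 * e2
    · exfalso
      rw [a, b, c] at hb
      apply n8
      linear_combination hb + (x + y + z + 2) * e1 - 3 * e2
  · rintro ⟨a, b, c⟩
    rw [a, b, c] at hb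
    have : (B p : F) * ((x - y) * (y - z) * (z - x)) = 0 := by rw [hb]; ring
    exact (mul_eq_zero.1 this).resolve_right hd

theorem mk_roots [IsAlgClosed F] (n2 : (2 : F) ≠ 0) (n3 : (3 : F) ≠ 0) {t d : F}
    (ht : t ^ 2 + t + 1 = 0) (hd : d ^ 2 = 33) :
    ∃ u v x y z : F, u ^ 3 = 26 + 6 * d ∧ u ≠ 0 ∧ v * u = -8 ∧
      x * 3 = 2 + u + v ∧ y * 3 = 2 + t * u + t ^ 2 * v ∧ z * 3 = 2 + t ^ 2 * u + t * v ∧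
      u = x + t ^ 2 * y + t * z ∧
      x + y + z = 2 ∧ x * y + y * z + z * x = 4 ∧ x * y * z = 4 := by
  obtain ⟨u, hu⟩ := IsAlgClosed.exists_pow_nat_eq (26 + 6 * d) (n := 3) (by norm_num)
  have u0 : u ≠ 0 := by
    rintro rfl
    have : (2 : F) ^ 9 = 0 := by linear_combination (26 - 6 * d) * hu - 36 * hd
    exact pow_ne_zero 9 n2 this
  have hv : (-8 / u) * u = -8 := by field_simp
  generalize -8 / u = v at hv
  have t3 : t ^ 3 = 1 := by linear_combination (t - 1) * ht
  have v3 : v ^ 3 = 26 - 6 * d := by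
    have : u ^ 3 * (v ^ 3 - (26 - 6 * d)) = 0 := by
      have h : u ^ 3 * v ^ 3 = -512 := by rw [← mul_pow, mul_comm, hv]; norm_num
      rw [mul_sub, h, hu]; linear_combination 36 * hd
    have := (mul_eq_zero.1 this).resolve_left (pow_ne_zero 3 u0)
    linear_combination this
  have hx : (2 + u + v) / 3 * 3 = 2 + u + v := by field_simp
  have hy : (2 + t * u + t ^ 2 * v) / 3 * 3 = 2 + t * u + t ^ 2 * v := by field_simp
  have hz : (2 + t ^ 2 * u + t * v) / 3 * 3 = 2 + t ^ 2 * u + t * v := by field_simp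
  generalize (2 + u + v) / 3 = x at hx
  generalize (2 + t * u + t ^ 2 * v) / 3 = y at hy
  generalize (2 + t ^ 2 * u + t * v) / 3 = z at hz
  refine ⟨u, v, x, y, z, hu, u0, hv, hx, hy, hz, ?_, ?_, ?_, ?_⟩
  · apply mul_right_cancel₀ n3
    have : (x + t ^ 2 * y + t * z) * 3 = x * 3 + t ^ 2 * (y * 3) + t * (z * 3) := by ring
    rw [this, hx, hy, hz]
    linear_combination (-2 - v * t ^ 2 + v * t - v) * ht - 2 * u * t3
  · apply mul_right_cancel₀ n3
    have : (x + y + z) * 3 = x * 3 + (y * 3) + (z * 3) := by ring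
    rw [this, hx, hy, hz]
    linear_combination (u + v) * ht
  · apply mul_right_cancel₀ (mul_ne_zero n3 n3)
    have : (x * y + y * z + z * x) * (3 * 3) =
      (x * 3) * (y * 3) + (y * 3) * (z * 3) + (z * 3) * (x * 3) := by ring
    rw [this, hx, hy, hz]
    have t2 : t ^ 2 = -t - 1 := by linear_combination ht
    rw [t2]
    linear_combination (-3) * hv + (- u ^ 2 - v ^ 2 + 2 * u * v) * ht
  · apply mul_right_cancel₀ (pow_ne_zero 3 n3)
    have : (x * y * z) * 3 ^ 3 = (x * 3) * (y * 3) * (z * 3) := by ring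
    rw [this, hx, hy, hz]
    have t2 : t ^ 2 = -t - 1 := by linear_combination ht
    have key : (2 + u + v) * (2 + t * u + t ^ 2 * v) * (2 + t ^ 2 * u + t * v)
      = 8 + u ^ 3 + v ^ 3 - 6 * (v * u) := by
      have A : (2 + t * u + t ^ 2 * v) * (2 + t ^ 2 * u + t * v) =
         4 + u ^ 2 + v ^ 2 - 2 * u - 2 * v - u * v := by
        rw [t2]
        linear_combination (-u ^ 2 - v ^ 2 + 2 * u * v) * ht
      rw [mul_assoc, A]; ring
    rw [key, hu, v3, hv]; ring

end fin
end Eis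

namespace Eis
open scoped QuadraticAlgebra

section core
variable {p : ℕ} [hp : Fact p.Prime]

theorem ne_zero_of {F : Type*} [Field F] [CharP F p] {q : ℕ} (hq : q.Prime) (h : p ≠ q) :
    (q : F) ≠ 0 := by
  intro h0
  rw [CharP.cast_eq_zero_iff F p] at h0
  exact h ((Nat.prime_dvd_prime_iff_eq hp.out hq).1 h0)

theorem fixed_of {F : Type*} [Field F] (u : F) (hu : u ≠ 0) :
    u ^ (p ^ 2 - 1) = 1 ↔ u ^ (p ^ 2) = u := by
  have h1 : p ^ 2 - 1 + 1 = p ^ 2 := Nat.sub_add_cancel (Nat.one_le_pow _ _ hp.out.pos)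
  have h2 : u ^ p ^ 2 = u ^ (p ^ 2 - 1) * u := by
    rw [← pow_succ, h1]
  rw [h2]
  exact (mul_eq_right₀ hu).symm

theorem core (hp2 : p ≠ 2) (hp3 : p ≠ 3) {a b : ℤ} (hab : a ^ 2 + 11 * b ^ 2 = 108 * p)
    (hb3 : ¬ 3 ∣ b) (hbp : ¬ (p : ℤ) ∣ b) {C : Eis} (him : C.im = 3 * a)
    (hre : 2 * C.re = 13 * b + 3 * a) [CharP (AlgebraicClosure (ZMod p)) p] :
    ∃ x y z : AlgebraicClosure (ZMod p),
      x + y + z = 2 ∧ x * y + y * z + z * x = 4 ∧ x * y * z = 4 ∧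
      (Even a → x ^ p ^ 2 = x ∧ y ^ p ^ 2 = y ∧ z ^ p ^ 2 = z) ∧
      (x ^ p = x ∧ y ^ p = y ∧ z ^ p = z → Even a) := by
  obtain ⟨h⟩ := exists_hom (AlgebraicClosure (ZMod p))
  have phi := phi_eval hp2 hp3 hab hb3 hbp him hre h
  have ht := hom_w h
  have hC := hom_apply h C
  have hS := hom_apply h (star C)
  have n2 : (2 : AlgebraicClosure (ZMod p)) ≠ 0 := by
    exact_mod_cast ne_zero_of (p := p) Nat.prime_two hp2
  have n3 : (3 : AlgebraicClosure (ZMod p)) ≠ 0 := by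
    exact_mod_cast ne_zero_of (p := p) Nat.prime_three hp3
  have b0 : (b : AlgebraicClosure (ZMod p)) ≠ 0 := by
    rwa [Ne, CharP.intCast_eq_zero_iff _ p]
  have hT : h (T C) = h C ^ 2 * h (star C) := by simp [T]
  generalize h w = t at *
  have habF : (a : AlgebraicClosure (ZMod p)) ^ 2 = -11 * b ^ 2 := by
    have := congrArg (Int.cast : ℤ → AlgebraicClosure (ZMod p)) hab
    push_cast at this
    rw [CharP.cast_eq_zero] at this
    linear_combination this
  obtain ⟨d, hd⟩ : ∃ d, d * (b : AlgebraicClosure (ZMod p)) = a * (1 + 2 * t) :=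
    ⟨a * (1 + 2 * t) / b, by field_simp⟩
  have hd2 : d ^ 2 = 33 := by
    apply mul_right_cancel₀ (pow_ne_zero 2 b0)
    rw [← mul_pow, hd]
    linear_combination (1 + 2 * t) ^ 2 * habF - 44 * b ^ 2 * ht
  have hreF : 2 * (C.re : AlgebraicClosure (ZMod p)) = 13 * b + 3 * a := by
    exact_mod_cast congrArg (Int.cast : ℤ → AlgebraicClosure (ZMod p)) hre
  have c1 : 2 * h C = b * (13 + 3 * d) := by
    rw [hC, him]; push_cast
    linear_combination hreF - 3 * hd
  have c2 : 2 * h (star C) = b * (13 - 3 * d) := by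
    rw [hS]
    simp only [QuadraticAlgebra.re_star, QuadraticAlgebra.im_star, him]
    push_cast
    linear_combination hreF + 3 * hd
  obtain ⟨u, v, x, y, z, hu, u0, hv, hx, hy, hz, huu, e1, e2, e3⟩ := mk_roots n2 n3 ht hd2
  have hTu : h (T C) = (((-2 * b : ℤ) : AlgebraicClosure (ZMod p)) * u) ^ 3 := by
    apply mul_right_cancel₀ (pow_ne_zero 3 n2)
    rw [hT, mul_pow, hu]
    have : h C ^ 2 * h (star C) * 2 ^ 3 = (2 * h C) ^ 2 * (2 * h (star C)) := by ring
    rw [this, c1, c2]; push_cast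
    linear_combination (-9 * b ^ 3 * (13 + 3 * d)) * hd2
  have hdv := three_dvd hp.out hp3
  have hpow : h (T C) ^ ((p ^ 2 - 1) / 3) = u ^ (p ^ 2 - 1) := by
    rw [hTu, ← pow_mul, Nat.mul_div_cancel' hdv, mul_pow, int_pow, one_mul]
    push_cast
    exact mul_ne_zero (neg_ne_zero.2 n2) b0
  rw [hpow, fixed_of u u0] at phi
  have t3 : t ^ 3 = 1 := by linear_combination (t - 1) * ht
  have tf : t ^ p ^ 2 = t := by
    rw [← fixed_of t (by rintro rfl; norm_num at t3)]
    obtain ⟨k, hk⟩ := hdv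
    rw [hk, pow_mul, t3, one_pow]
  refine ⟨x, y, z, e1, e2, e3, ?_, ?_⟩
  · intro he
    have uf := phi.2 he
    set φ := iterateFrobenius (AlgebraicClosure (ZMod p)) p 2 with hφ
    have hφa : ∀ c, φ c = c ^ p ^ 2 := fun c => iterateFrobenius_def p 2 c
    have pu : φ u = u := by rw [hφa, uf]
    have pt : φ t = t := by rw [hφa, tf]
    have pv : φ v = v := by
      apply mul_right_cancel₀ u0
      have := congrArg φ hv
      rw [map_mul, pu, map_neg, map_ofNat] at this
      rw [this, hv]
    simp only [← hφa]
    refine ⟨?_, ?_, ?_⟩ <;> apply mul_right_cancel₀ n3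
    · have := congrArg φ hx
      simp only [map_mul, map_add, map_pow, map_ofNat, pu, pv, pt] at this
      rw [this, hx]
    · have := congrArg φ hy
      simp only [map_mul, map_add, map_pow, map_ofNat, pu, pv, pt] at this
      rw [this, hy]
    · have := congrArg φ hz
      simp only [map_mul, map_add, map_pow, map_ofNat, pu, pv, pt] at this
      rw [this, hz]
  · rintro ⟨fx, fy, fz⟩
    apply phi.1
    set φ := iterateFrobenius (AlgebraicClosure (ZMod p)) p 2 with hφ
    have hφa : ∀ c, φ c = c ^ p ^ 2 := fun c => iterateFrobenius_def p 2 c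
    have two : ∀ c : AlgebraicClosure (ZMod p), c ^ p = c → φ c = c := by
      intro c hc; rw [hφa, pow_two, pow_mul, hc, hc]
    have pt : φ t = t := by rw [hφa, tf]
    rw [← hφa, huu]
    simp only [map_mul, map_add, map_pow, pt, two x fx, two y fy, two z fz]

theorem delta_fixed_int {F : Type*} [Field F] [CharP F p] {c : F} (hc : c ^ p = c) :
    ∃ r : ℤ, (r : F) = c := by
  have h := (Subfield.mem_bot_iff_pow_eq_self (F := F) (p := p)).2 hc
  exact (mem_bot_iff_intCast p F).1 h

end core

theorem final (B : ℕ → ℤ)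
    (h0 : B 0 = 0) (h1 : B 1 = 0) (h2 : B 2 = 1)
    (hrec : ∀ n, B (n + 3) = 2 * B (n + 2) - 4 * B (n + 1) + 4 * B n)
    (p : ℕ) (hp : p.Prime) (hp2 : p ≠ 2) (hp3 : p ≠ 3) (hp11 : p ≠ 11) (hp13 : p ≠ 13) :
    (p : ℤ) ∣ B p ↔ ∃ X Y : ℤ, (p : ℤ) = X ^ 2 + 11 * Y ^ 2 := by
  haveI : Fact p.Prime := ⟨hp⟩
  haveI : CharP (AlgebraicClosure (ZMod p)) p :=
    charP_of_injective_algebraMap (algebraMap (ZMod p) _).injective p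
  have n2 : (2 : AlgebraicClosure (ZMod p)) ≠ 0 := by
    exact_mod_cast ne_zero_of (p := p) Nat.prime_two hp2
  have n3 : (3 : AlgebraicClosure (ZMod p)) ≠ 0 := by
    exact_mod_cast ne_zero_of (p := p) Nat.prime_three hp3
  have n11 : (11 : AlgebraicClosure (ZMod p)) ≠ 0 := by
    exact_mod_cast ne_zero_of (p := p) (q := 11) (by norm_num) hp11
  have n13 : (13 : AlgebraicClosure (ZMod p)) ≠ 0 := by
    exact_mod_cast ne_zero_of (p := p) (q := 13) (by norm_num) hp13
  have p1 : ∀ c d : AlgebraicClosure (ZMod p), (c - d) ^ p = c ^ p - d ^ p :=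
    fun c d => map_sub (frobenius _ p) c d
  rw [← CharP.intCast_eq_zero_iff (AlgebraicClosure (ZMod p)) p]
  constructor
  · intro hB
    obtain ⟨h⟩ := exists_hom (AlgebraicClosure (ZMod p))
    obtain ⟨d, hd⟩ := IsAlgClosed.exists_pow_nat_eq (33 : AlgebraicClosure (ZMod p)) (n := 2)
      (by norm_num)
    obtain ⟨u, v, x, y, z, -, -, -, -, -, -, -, e1, e2, e3⟩ := mk_roots n2 n3 (hom_w h) hd
    obtain ⟨fx, fy, fz⟩ := (roots_iff B h0 h1 h2 hrec n2 n11 n13 e1 e2 e3).1 hB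
    have hδ := disc e1 e2 e3
    have hδp : ((x - y) * (y - z) * (z - x)) ^ p = (x - y) * (y - z) * (z - x) := by
      simp only [mul_pow, p1, fx, fy, fz]
    generalize (x - y) * (y - z) * (z - x) = δ at hδ hδp
    obtain ⟨r, hr⟩ := delta_fixed_int hδp
    rw [← hr] at hδ
    have hdv : (p : ℤ) ∣ r ^ 2 + 176 := by
      rw [← CharP.intCast_eq_zero_iff (AlgebraicClosure (ZMod p)) p]
      push_cast; rw [hδ]; ring
    have hr' : ∃ r' : ℤ, (p : ℤ) ∣ r' ^ 2 + 11 := by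
      have hc : IsCoprime (4 : ℤ) p := by
        have : Nat.Coprime 4 p := by
          have : Nat.Coprime (2 ^ 2) p :=
            Nat.Coprime.pow_left 2 ((Nat.coprime_primes Nat.prime_two hp).2 (Ne.symm hp2))
          simpa using this
        exact_mod_cast Nat.isCoprime_iff_coprime.2 this
      obtain ⟨i, j, hij⟩ := hc
      refine ⟨i * r, ?_⟩
      obtain ⟨k, hk⟩ := hdv
      refine ⟨i ^ 2 * k + 11 * (2 * j - j ^ 2 * p), ?_⟩
      linear_combination i ^ 2 * hk - 11 * (1 + i * 4 - j * p) * hij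
    obtain ⟨r', hr'⟩ := hr'
    obtain ⟨X, Y, hXY⟩ := exists_rep hp hp2 hr'
    obtain ⟨a, b, hab, hb3, hbp, hpar, C, him, hre⟩ :=
      transfer hp hp2 hp3 (a0 := 2 * X + Y) (b0 := Y) (by rw [hXY]; ring)
    obtain ⟨x, y, z, e1, e2, e3, -, k2⟩ := core hp2 hp3 hab hb3 hbp him hre
    have he := k2 ((roots_iff B h0 h1 h2 hrec n2 n11 n13 e1 e2 e3).1 hB)
    obtain ⟨k, hk⟩ := hpar.1 he
    exact ⟨X + k, k, by rw [hXY, hk]; ring⟩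
  · rintro ⟨X, Y, hXY⟩
    obtain ⟨a, b, hab, hb3, hbp, hpar, C, him, hre⟩ :=
      transfer hp hp2 hp3 (a0 := 2 * X) (b0 := 2 * Y) (by rw [hXY]; ring)
    obtain ⟨x, y, z, e1, e2, e3, k1, -⟩ := core hp2 hp3 hab hb3 hbp him hre
    obtain ⟨gx, gy, gz⟩ := k1 (hpar.2 (even_two_mul Y))
    rw [pow_two, pow_mul] at gx gy gz
    refine (roots_iff B h0 h1 h2 hrec n2 n11 n13 e1 e2 e3).2 ?_
    have hδ := disc e1 e2 e3
    have hne := delta_ne n2 n11 e1 e2 e3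
    obtain ⟨hxy, hyz, hzx⟩ := roots_ne hne
    have b0 : (b : AlgebraicClosure (ZMod p)) ≠ 0 := by
      rwa [Ne, CharP.intCast_eq_zero_iff _ p]
    have habF : (a : AlgebraicClosure (ZMod p)) ^ 2 = -11 * b ^ 2 := by
      have := congrArg (Int.cast : ℤ → AlgebraicClosure (ZMod p)) hab
      push_cast at this
      rw [CharP.cast_eq_zero] at this
      linear_combination this
    have hfz : ∀ m : ℤ, (m : AlgebraicClosure (ZMod p)) ^ p = m := fun m =>
      map_intCast (frobenius (AlgebraicClosure (ZMod p)) p) m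
    have hδp : ((x - y) * (y - z) * (z - x)) ^ p = (x - y) * (y - z) * (z - x) := by
      generalize (x - y) * (y - z) * (z - x) = δ at *
      have hsq : (δ * b) ^ 2 = ((4 * a : ℤ) : AlgebraicClosure (ZMod p)) ^ 2 := by
        rw [mul_pow, hδ]; push_cast; linear_combination -16 * habF
      apply mul_right_cancel₀ b0
      nth_rewrite 1 [← hfz b]
      rw [← mul_pow]
      rcases sq_eq_sq_iff_eq_or_eq_neg.1 hsq with e | e
      · rw [e, hfz]
      · rw [e, ← Int.cast_neg, hfz]
    have habs : ((x - y) * (y - z) * (z - x)) ^ p ≠ -((x - y) * (y - z) * (z - x)) := by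
      intro e
      rw [hδp] at e
      have : 2 * ((x - y) * (y - z) * (z - x)) = 0 := by linear_combination e
      exact mul_ne_zero n2 hne this
    simp only [mul_pow, p1] at habs
    rcases perm_cases (p := p) e1 e2 e3 hxy hyz hzx with h | ⟨a, b, c⟩ | ⟨a, b, c⟩ | ⟨a, b, c⟩ |
      ⟨a, b, c⟩ | ⟨a, b, c⟩
    · exact h
    · exfalso; rw [a, b, c] at habs; apply habs; ring
    · exfalso; rw [a, b, c] at habs; apply habs; ring
    · exfalso; rw [a, b, c] at habs; apply habs; ring
    · exfalso; rw [a, b] at gx; exact hzx gx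
    · exfalso; rw [a, c] at gx; exact hxy gx.symm

end Eis

theorem berstel_divisibility (B : ℕ → ℤ)
    (h0 : B 0 = 0) (h1 : B 1 = 0) (h2 : B 2 = 1)
    (hrec : ∀ n, B (n + 3) = 2 * B (n + 2) - 4 * B (n + 1) + 4 * B n)
    (p : ℕ) (hp : p.Prime) (hpe : ¬ (p ∣ 2 * 3 * 11 * 13)) :
    (p : ℤ) ∣ B p ↔ ∃ X Y : ℤ, (p : ℤ) = X ^ 2 + 11 * Y ^ 2 := by
  have hh : ∀ q, q ∣ 2 * 3 * 11 * 13 → p ≠ q := fun q hq h => hpe (h ▸ hq)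
  exact Eis.final B h0 h1 h2 hrec p hp (hh 2 (by norm_num)) (hh 3 (by norm_num))
    (hh 11 (by norm_num)) (hh 13 (by norm_num))
end
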